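/- arXiv:2208.05575 — 9 statements merged into one kernel-verified Lean document; each statement's English description precedes it below -/
import Mathlib

section
/- Let n ≥ 1, let M be an n×n real symmetric matrix, let α be a real number, and let M' be the (n−1)×(n−1) principal submatrix of M obtained by deleting one row and the corresponding column. Then the multiplicity of α as an eigenvalue of M and the multiplicity of α as an eigenvalue of M' differ by at most 1. -/
/-!
Put `A = M - α I` and let `A'` be `A` with row and column `i` deleted, which is `M' - α I`.
Deleting a row or a column lowers the rank of a matrix by at most one, so
`rank A' ≤ rank A ≤ rank A' + 2` (`rank_le_rank_delete_row_add_one`, applied to a matrix and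
to its transpose). By rank-nullity the nullities are `n + 1 - rank A` and `n - rank A'`, so
their difference `1 - (rank A - rank A')` lies between `-1` and `1`.
-/

/-- Multiplicity of `α` as an eigenvalue of a real matrix `M`:
the dimension over `ℝ` of the kernel of `M - α•I`. -/
noncomputable def eigMult {I : Type} [Fintype I] (M : Matrix I I ℝ) (α : ℝ) : ℕ :=
  letI := Classical.decEq I
  Module.finrank ℝ (LinearMap.ker (M - α • (1 : Matrix I I ℝ)).mulVecLin)

/-- Multiplicity of `α` as an adjacency eigenvalue of a finite simple graph. -/
noncomputable def adjMult {V : Type} [Finite V] (G : SimpleGraph V) (α : ℝ) : ℕ :=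
  letI := Fintype.ofFinite V
  letI := Classical.decRel G.Adj
  eigMult (G.adjMatrix ℝ) α

/-- Deleting row `i` lowers the rank by at most one, because the row space of `B` is spanned by
row `i` together with the remaining rows. -/
theorem rank_le_rank_delete_row_add_one {n : ℕ} {m : Type} [Fintype m]
    (B : Matrix (Fin (n + 1)) m ℝ) (i : Fin (n + 1)) :
    B.rank ≤ (B.submatrix i.succAbove id).rank + 1 := by
  rw [Matrix.rank_eq_finrank_span_row, Matrix.rank_eq_finrank_span_row]
  have hle : Submodule.span ℝ (Set.range B.row) ≤
      Submodule.span ℝ (Set.range (B.submatrix i.succAbove id).row) ⊔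
        Submodule.span ℝ {B.row i} := by
    rw [Submodule.span_le]
    rintro _ ⟨j, rfl⟩
    rcases Fin.eq_self_or_eq_succAbove i j with rfl | ⟨k, rfl⟩
    · exact Submodule.mem_sup_right (Submodule.mem_span_singleton_self _)
    · exact Submodule.mem_sup_left (Submodule.subset_span ⟨k, rfl⟩)
  have hone : Module.finrank ℝ (Submodule.span ℝ {B.row i}) ≤ 1 := by
    simpa using finrank_span_le_card (R := ℝ) ({B.row i} : Set (m → ℝ))
  have hsup := Submodule.finrank_add_le_finrank_add_finrank
    (Submodule.span ℝ (Set.range (B.submatrix i.succAbove id).row))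
    (Submodule.span ℝ {B.row i})
  have := Submodule.finrank_mono hle
  omega

theorem rank_le_rank_delete_row_col_add_two {n : ℕ}
    (A : Matrix (Fin (n + 1)) (Fin (n + 1)) ℝ) (i : Fin (n + 1)) :
    A.rank ≤ (A.submatrix i.succAbove i.succAbove).rank + 2 := by
  have hrow := rank_le_rank_delete_row_add_one A i
  have hcol := rank_le_rank_delete_row_add_one (A.submatrix i.succAbove id).transpose i
  have hcolrank : ((A.submatrix i.succAbove id).transpose.submatrix i.succAbove id).rank =
      (A.submatrix i.succAbove i.succAbove).rank :=
    Matrix.rank_transpose (A.submatrix i.succAbove i.succAbove)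
  rw [Matrix.rank_transpose, hcolrank] at hcol
  omega

/-- Rank-nullity for the eigenvalue multiplicity. An arbitrary `DecidableEq`
instance is allowed, although `eigMult` is defined with the classical one. -/
theorem rank_add_eigMult {I : Type} [Fintype I] [DecidableEq I] (M : Matrix I I ℝ) (α : ℝ) :
    (M - α • (1 : Matrix I I ℝ)).rank + eigMult M α = Fintype.card I := by
  have h := (M - α • (1 : Matrix I I ℝ)).mulVecLin.finrank_range_add_finrank_ker
  rw [Module.finrank_fintype_fun_eq_card] at h
  rw [← h, eigMult, Matrix.rank]
  congr!

theorem stmt0 (n : ℕ) (M : Matrix (Fin (n + 1)) (Fin (n + 1)) ℝ) (hM : M.IsSymm)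
    (α : ℝ) (i : Fin (n + 1)) :
    |(eigMult M α : ℤ) - (eigMult (M.submatrix i.succAbove i.succAbove) α : ℤ)| ≤ 1 := by
  have hA := rank_add_eigMult M α
  have hA' := rank_add_eigMult (M.submatrix i.succAbove i.succAbove) α
  have hsub : M.submatrix i.succAbove i.succAbove - α • (1 : Matrix (Fin n) (Fin n) ℝ) =
      (M - α • (1 : Matrix (Fin (n + 1)) (Fin (n + 1)) ℝ)).submatrix
        i.succAbove i.succAbove := by
    ext j k
    simp [Matrix.one_apply]
  have hlower := Matrix.rank_submatrix_le
    (M - α • (1 : Matrix (Fin (n + 1)) (Fin (n + 1)) ℝ)) i.succAbove i.succAbove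
  have hupper := rank_le_rank_delete_row_col_add_two
    (M - α • (1 : Matrix (Fin (n + 1)) (Fin (n + 1)) ℝ)) i
  rw [hsub] at hA'
  simp only [Fintype.card_fin] at hA hA'
  rw [abs_le]
  omega
end

section
/- Let M be an n×n real symmetric matrix, let α be a real number, let S be a set of l indices, and let M' be the principal submatrix of M obtained by deleting the rows and columns indexed by S. Then the multiplicity of α as an eigenvalue of M and the multiplicity of α as an eigenvalue of M' differ by at most l. -/
/-- If the vectors of `K` killed by `f : X → W` embed linearly into `L`, then
`dim K ≤ dim W + dim L`. -/
lemma finrank_le_of_conditions {X Y W : Type*} [AddCommGroup X] [Module ℝ X]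
    [AddCommGroup Y] [Module ℝ Y] [AddCommGroup W] [Module ℝ W]
    [FiniteDimensional ℝ X] [FiniteDimensional ℝ Y] [FiniteDimensional ℝ W]
    (K : Submodule ℝ X) (L : Submodule ℝ Y) (f : X →ₗ[ℝ] W) (g : X →ₗ[ℝ] Y)
    (hL : ∀ x ∈ K, f x = 0 → g x ∈ L) (h0 : ∀ x ∈ K, f x = 0 → g x = 0 → x = 0) :
    Module.finrank ℝ K ≤ Module.finrank ℝ W + Module.finrank ℝ L := by
  have hrn := (f.domRestrict K).finrank_range_add_finrank_ker
  have hW := Submodule.finrank_le (LinearMap.range (f.domRestrict K))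
  have hmem : ∀ x : LinearMap.ker (f.domRestrict K), f (x : K) = 0 := fun x => x.2
  let h : LinearMap.ker (f.domRestrict K) →ₗ[ℝ] L :=
    LinearMap.codRestrict L ((g.domRestrict K).comp (Submodule.subtype _))
      (fun x => hL _ x.1.2 (hmem x))
  have hinj : Function.Injective h := by
    rw [injective_iff_map_eq_zero]
    intro x hx
    have hgx : g (x : K) = 0 := congrArg Subtype.val hx
    exact Subtype.ext (Subtype.ext (h0 _ x.1.2 (hmem x) hgx))
  have hker := LinearMap.finrank_le_finrank_of_injective hinj
  omega

lemma mulVec_eq_of_vanish {n : ℕ} (A : Matrix (Fin n) (Fin n) ℝ) (S : Finset (Fin n))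
    (y : Fin n → ℝ) (hy : ∀ i ∈ S, y i = 0) (i : {i : Fin n // i ∉ S}) :
    (A.submatrix (fun i : {i : Fin n // i ∉ S} => i.val)
      (fun i : {i : Fin n // i ∉ S} => i.val)).mulVec (fun j => y j.val) i
      = A.mulVec y i.val := by
  simp only [Matrix.mulVec, dotProduct, Matrix.submatrix_apply]
  rw [← Finset.sum_subtype (Finset.univ.filter (fun j => j ∉ S)) (by simp)
    (fun j => A i.val j * y j)]
  refine Finset.sum_subset (Finset.subset_univ _) fun j _ hj => ?_
  rw [hy j (by simpa using hj), mul_zero]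

/-- Extension of a vector by zero on `S`. -/
def extendZero {n : ℕ} (S : Finset (Fin n)) :
    ({i : Fin n // i ∉ S} → ℝ) →ₗ[ℝ] (Fin n → ℝ) where
  toFun x i := if h : i ∉ S then x ⟨i, h⟩ else 0
  map_add' x y := by ext i; by_cases h : i ∈ S <;> simp [h]
  map_smul' c x := by ext i; by_cases h : i ∈ S <;> simp [h]

lemma extendZero_apply_mem {n : ℕ} (S : Finset (Fin n)) (x : {i : Fin n // i ∉ S} → ℝ)
    (i : Fin n) (hi : i ∈ S) : extendZero S x i = 0 := by
  simp [extendZero, hi]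

lemma extendZero_restrict {n : ℕ} (S : Finset (Fin n)) (x : {i : Fin n // i ∉ S} → ℝ) :
    (fun j : {i : Fin n // i ∉ S} => extendZero S x j.val) = x := by
  ext j
  simp [extendZero, j.2]

lemma finrank_ker_le {n : ℕ} (A : Matrix (Fin n) (Fin n) ℝ) (S : Finset (Fin n)) :
    Module.finrank ℝ (LinearMap.ker A.mulVecLin) ≤ S.card +
      Module.finrank ℝ (LinearMap.ker (A.submatrix (fun i : {i : Fin n // i ∉ S} => i.val)
        (fun i : {i : Fin n // i ∉ S} => i.val)).mulVecLin) := by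
  have hW : Module.finrank ℝ (S → ℝ) = S.card := by simp
  rw [← hW]
  refine finrank_le_of_conditions _ _ (LinearMap.funLeft ℝ ℝ (fun i : S => i.val))
    (LinearMap.funLeft ℝ ℝ (fun i : {i : Fin n // i ∉ S} => i.val)) ?_ ?_
  · intro x hx hf
    rw [LinearMap.mem_ker, Matrix.mulVecLin_apply] at hx ⊢
    ext i
    exact (mulVec_eq_of_vanish A S x (fun j hj => congrFun hf ⟨j, hj⟩) i).trans (congrFun hx _)
  · intro x _ hf hg
    ext i
    by_cases hi : i ∈ S
    · exact congrFun hf ⟨i, hi⟩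
    · exact congrFun hg ⟨i, hi⟩

lemma finrank_ker_submatrix_le {n : ℕ} (A : Matrix (Fin n) (Fin n) ℝ) (S : Finset (Fin n)) :
    Module.finrank ℝ (LinearMap.ker (A.submatrix (fun i : {i : Fin n // i ∉ S} => i.val)
        (fun i : {i : Fin n // i ∉ S} => i.val)).mulVecLin) ≤
      S.card + Module.finrank ℝ (LinearMap.ker A.mulVecLin) := by
  have hW : Module.finrank ℝ (S → ℝ) = S.card := by simp
  rw [← hW]
  refine finrank_le_of_conditions _ _
    (LinearMap.funLeft ℝ ℝ (fun i : S => i.val) ∘ₗ A.mulVecLin ∘ₗ extendZero S)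
    (extendZero S) ?_ ?_
  · intro x hx hf
    rw [LinearMap.mem_ker, Matrix.mulVecLin_apply] at hx ⊢
    ext i
    by_cases hi : i ∈ S
    · exact congrFun hf ⟨i, hi⟩
    · have h := mulVec_eq_of_vanish A S _ (extendZero_apply_mem S x) ⟨i, hi⟩
      rw [extendZero_restrict, hx] at h
      exact h.symm
  · intro x _ _ hg
    rw [← extendZero_restrict S x, hg]
    rfl

theorem stmt1 (n l : ℕ) (M : Matrix (Fin n) (Fin n) ℝ) (hM : M.IsSymm) (α : ℝ)
    (S : Finset (Fin n)) (hS : S.card = l) :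
    |(eigMult M α : ℤ) -
      (eigMult (M.submatrix (fun i : {i : Fin n // i ∉ S} => i.val)
        (fun i : {i : Fin n // i ∉ S} => i.val)) α : ℤ)| ≤ (l : ℤ) := by
  have h1 := finrank_ker_le (M - α • 1) S
  have h2 := finrank_ker_submatrix_le (M - α • 1) S
  have hA : eigMult M α = Module.finrank ℝ (LinearMap.ker (M - α • 1).mulVecLin) := by
    unfold eigMult
    congr!
  have hB : eigMult (M.submatrix (fun i : {i : Fin n // i ∉ S} => i.val)
      (fun i : {i : Fin n // i ∉ S} => i.val)) α =
      Module.finrank ℝ (LinearMap.ker ((M - α • 1).submatrix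
        (fun i : {i : Fin n // i ∉ S} => i.val)
        (fun i : {i : Fin n // i ∉ S} => i.val)).mulVecLin) := by
    -- `eigMult` builds its identity matrix from the classical decidability instance; rewriting with
    -- an entrywise equality avoids comparing the two instances inside dependent types.
    have hsub : (M - α • 1).submatrix (fun i : {i : Fin n // i ∉ S} => i.val)
        (fun i : {i : Fin n // i ∉ S} => i.val) =
        M.submatrix (fun i : {i : Fin n // i ∉ S} => i.val)
          (fun i : {i : Fin n // i ∉ S} => i.val) -
        α • @OfNat.ofNat (Matrix _ _ ℝ) 1 (@One.toOfNat1 _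
          (@Matrix.one _ _ (Classical.decEq {i : Fin n // i ∉ S}) _ _)) := by
      ext i j
      simp [Matrix.one_apply, Subtype.ext_iff]
    rw [hsub]
    rfl
  rw [hA, hB, abs_le]
  omega
end

section
/- Let G be a finite simple graph, let u_1, …, u_l be distinct vertices of G, let H be a finite tree with a distinguished root vertex h, and let k_1, …, k_l be positive integers. Let T be the graph obtained from the disjoint union of G together with k_1 + k_2 + ⋯ + k_l copies of H by adding, for each i ∈ {1, …, l}, an edge joining u_i to the root of each of k_i of the copies of H. Then every eigenvalue α of the adjacency matrix of H is an eigenvalue of the adjacency matrix of T with multiplicity N_α(T) ≥ (k_1 − 1) + (k_2 − 1) + ⋯ + (k_l − 1). -/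
/-- The graph obtained from the disjoint union of `G` and, for each `i : Fin l`,
`k i` copies of the rooted graph `(H, h)`, by joining the root of each of the `k i`
copies indexed by `i` to the vertex `u i` of `G` by an edge. -/
def attachCopies {V W : Type} (G : SimpleGraph V) {l : ℕ} (u : Fin l → V)
    (H : SimpleGraph W) (h : W) (k : Fin l → ℕ) :
    SimpleGraph (V ⊕ ((Σ i : Fin l, Fin (k i)) × W)) :=
  SimpleGraph.fromRel (fun a b =>
    match a, b with
    | Sum.inl x, Sum.inl y => G.Adj x y
    | Sum.inl x, Sum.inr (c, w) => x = u c.1 ∧ w = h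
    | Sum.inr (c, w), Sum.inr (c', w') => c = c' ∧ H.Adj w w'
    | _, _ => False)

/-- The `i`-th coordinate is the sum of the coefficients of the `k i` copies of index `i`. -/
def bundleSum {l : ℕ} (k : Fin l → ℕ) :
    ((Σ i : Fin l, Fin (k i)) → ℝ) →ₗ[ℝ] (Fin l → ℝ) where
  toFun c i := ∑ j, c ⟨i, j⟩
  map_add' c d := by ext i; simp [Finset.sum_add_distrib]
  map_smul' r c := by ext i; simp [Finset.mul_sum]

/-- The vector equal to `c p • x` on the copy `p` and to `0` on the base graph, linear in `c`. -/
def copyVector {P W : Type} (V : Type) (x : W → ℝ) :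
    (P → ℝ) →ₗ[ℝ] (V ⊕ (P × W) → ℝ) where
  toFun c := Sum.elim (fun _ => 0) (fun q => c q.1 * x q.2)
  map_add' c d := by ext (v | q) <;> simp [add_mul]
  map_smul' r c := by ext (v | q) <;> simp [mul_assoc]

lemma attachCopies_adj_inl_inr {V W : Type} (G : SimpleGraph V) {l : ℕ} (u : Fin l → V)
    (H : SimpleGraph W) (h : W) (k : Fin l → ℕ) (v : V) (p : Σ i : Fin l, Fin (k i)) (w : W) :
    (attachCopies G u H h k).Adj (Sum.inl v) (Sum.inr (p, w)) ↔ v = u p.1 ∧ w = h := by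
  simp [attachCopies]

lemma attachCopies_adj_inr_inr {V W : Type} (G : SimpleGraph V) {l : ℕ} (u : Fin l → V)
    (H : SimpleGraph W) (h : W) (k : Fin l → ℕ) (p q : Σ i : Fin l, Fin (k i)) (w z : W) :
    (attachCopies G u H h k).Adj (Sum.inr (p, w)) (Sum.inr (q, z)) ↔ p = q ∧ H.Adj w z := by
  simp only [attachCopies, SimpleGraph.fromRel_adj]
  constructor
  · rintro ⟨-, ⟨rfl, a⟩ | ⟨rfl, a⟩⟩
    · exact ⟨rfl, a⟩
    · exact ⟨rfl, a.symm⟩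
  · rintro ⟨rfl, a⟩
    exact ⟨by simpa using a.ne, Or.inl ⟨rfl, a⟩⟩

/-- Membership in the eigenspace, for arbitrary instances. -/
lemma mem_ker_adjMatrix_iff {I : Type} [Fintype I] [DecidableEq I] (G : SimpleGraph I)
    [DecidableRel G.Adj] (α : ℝ) (y : I → ℝ) :
    y ∈ LinearMap.ker (G.adjMatrix ℝ - α • (1 : Matrix I I ℝ)).mulVecLin ↔
      ∀ a, ∑ b, (if G.Adj a b then y b else 0) = α * y a := by
  rw [LinearMap.mem_ker, Matrix.mulVecLin_apply, Matrix.sub_mulVec, Matrix.smul_mulVec,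
    Matrix.one_mulVec, sub_eq_zero, funext_iff]
  simp [Matrix.mulVec, dotProduct, SimpleGraph.adjMatrix_apply]

open Classical in
lemma copyVector_mem_ker {V W : Type} [Fintype V] [Fintype W] (G : SimpleGraph V) {l : ℕ}
    (u : Fin l → V) (H : SimpleGraph W) (h : W) (k : Fin l → ℕ) (α : ℝ) (x : W → ℝ)
    (hx : ∀ w, ∑ z, (if H.Adj w z then x z else 0) = α * x w)
    (c : (Σ i : Fin l, Fin (k i)) → ℝ) (hc : bundleSum k c = 0)
    (a : V ⊕ ((Σ i : Fin l, Fin (k i)) × W)) :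
    ∑ b, (if (attachCopies G u H h k).Adj a b then copyVector V x c b else 0) =
      α * copyVector V x c a := by
  have hc' : ∀ i, ∑ j, c ⟨i, j⟩ = 0 := fun i => congrFun hc i
  rcases a with v | ⟨p, w⟩
  · simp only [Fintype.sum_sum_type, Fintype.sum_prod_type, attachCopies_adj_inl_inr, copyVector,
      LinearMap.coe_mk, AddHom.coe_mk, Sum.elim_inl, Sum.elim_inr, ite_self, Finset.sum_const_zero,
      zero_add, mul_zero, ite_and, Finset.sum_ite_irrel, Finset.sum_ite_eq', Finset.mem_univ,
      if_true, Fintype.sum_sigma]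
    refine Finset.sum_eq_zero fun i _ => ?_
    split_ifs
    · rw [← Finset.sum_mul, hc', zero_mul]
    · exact Finset.sum_const_zero
  · simp only [Fintype.sum_sum_type, Fintype.sum_prod_type, attachCopies_adj_inr_inr, copyVector,
      LinearMap.coe_mk, AddHom.coe_mk, Sum.elim_inl, Sum.elim_inr, ite_self, Finset.sum_const_zero,
      zero_add, ite_and, Finset.sum_ite_irrel, Finset.sum_ite_eq, Finset.mem_univ, if_true]
    rw [mul_left_comm, ← hx w, Finset.mul_sum]
    simp only [mul_ite, mul_zero]

lemma copyVector_injective {P W : Type} (V : Type) {x : W → ℝ} (hx : x ≠ 0) :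
    Function.Injective (copyVector (P := P) V x) := by
  obtain ⟨w, hw⟩ := Function.ne_iff.mp hx
  intro c d hcd
  ext p
  exact mul_right_cancel₀ hw (congrFun hcd (Sum.inr (p, w)))

/-- Rank-nullity for `bundleSum`; `1 ≤ k i` makes the truncated subtractions genuine. -/
lemma le_finrank_ker_bundleSum {l : ℕ} (k : Fin l → ℕ) (hk : ∀ i, 1 ≤ k i) :
    ∑ i, (k i - 1) ≤ Module.finrank ℝ (LinearMap.ker (bundleSum k)) := by
  have h1 := (bundleSum k).finrank_range_add_finrank_ker
  have h2 := (LinearMap.range (bundleSum k)).finrank_le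
  have h3 : ∑ i, (k i - 1) + l = ∑ i, k i := by
    have : ∑ i, (k i - 1 + 1) = ∑ i, k i :=
      Finset.sum_congr rfl fun i _ => Nat.sub_add_cancel (hk i)
    simpa [Finset.sum_add_distrib] using this
  simp only [Module.finrank_fintype_fun_eq_card, Fintype.card_sigma, Fintype.card_fin] at h1 h2
  omega

/-- Joining `k i ≥ 1` copies of a rooted tree `H` to each of the distinct vertices
`u 1, …, u l` of a finite graph `G` forces every eigenvalue `α` of `H` to be an
eigenvalue of the resulting graph with multiplicity at least `∑ (k i - 1)`. -/
theorem stmt4 {V W : Type} [Finite V] [Finite W] (G : SimpleGraph V) {l : ℕ}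
    (u : Fin l → V) (hu : Function.Injective u) (H : SimpleGraph W) (hH : H.IsTree)
    (h : W) (k : Fin l → ℕ) (hk : ∀ i, 1 ≤ k i) (α : ℝ) (hα : 1 ≤ adjMult H α) :
    ∑ i : Fin l, (k i - 1) ≤ adjMult (attachCopies G u H h k) α := by
  classical
  let _ := Fintype.ofFinite V
  let _ := Fintype.ofFinite W
  obtain ⟨⟨x, hxk⟩, hx0⟩ := Module.finrank_pos_iff_exists_ne_zero.mp hα
  have hx := (mem_ker_adjMatrix_iff H α x).mp hxk
  have hx' : ∀ w, ∑ z, (if H.Adj w z then x z else 0) = α * x w := by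
    intro w
    convert hx w
  have hx0 : x ≠ 0 := fun e => hx0 (Subtype.ext e)
  refine (le_finrank_ker_bundleSum k hk).trans ?_
  unfold adjMult eigMult
  refine LinearMap.finrank_le_finrank_of_injective
    (f := ((copyVector V x).comp (LinearMap.ker (bundleSum k)).subtype).codRestrict _ ?_) ?_
  · intro c
    -- the instances chosen inside `adjMult` are matched by unification, not by synthesis
    refine (@mem_ker_adjMatrix_iff _ (_) (_) _ (_) α _).mpr fun a => ?_
    convert copyVector_mem_ker G u H h k α x hx' c.1 c.2 a <;> rfl
  · intro c d hcd
    exact Subtype.ext (copyVector_injective V hx0 (congrArg Subtype.val hcd))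
end

section
/- Let T be a finite simple graph, let S be a set of l vertices of T, let H be a finite simple graph, and let α be an eigenvalue of the adjacency matrix of H. If the graph obtained from T by deleting the vertices in S has at least K connected components whose induced subgraphs are isomorphic to H, then N_α(T) ≥ K − l. -/
/-- If `L` sends each of the linearly independent vectors `y c` to a function vanishing outside
`S`, then the kernel of `L` has dimension at least the number of vectors minus `|S|`. -/
theorem card_sub_card_le_finrank_ker {V ι : Type} [Fintype V] [Fintype ι] (S : Finset V)
    (L : (V → ℝ) →ₗ[ℝ] (V → ℝ)) (y : ι → V → ℝ) (hy : LinearIndependent ℝ y)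
    (hL : ∀ c, ∀ v ∉ S, L (y c) v = 0) :
    Fintype.card ι ≤ Module.finrank ℝ (LinearMap.ker L) + S.card := by
  classical
  let Φ : (ι → ℝ) →ₗ[ℝ] (V → ℝ) := Fintype.linearCombination ℝ y
  have hΦ : Function.Injective Φ := hy.fintypeLinearCombination_injective
  let R : (V → ℝ) →ₗ[ℝ] (S → ℝ) := LinearMap.funLeft ℝ ℝ Subtype.val
  let F := R ∘ₗ L ∘ₗ Φ
  have hrn := F.finrank_range_add_finrank_ker
  have hrange : Module.finrank ℝ (LinearMap.range F) ≤ S.card := by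
    simpa using (LinearMap.range F).finrank_le
  have hmap : (LinearMap.ker F).map Φ ≤ LinearMap.ker L := by
    rintro _ ⟨a, ha, rfl⟩
    rw [LinearMap.mem_ker]
    funext v
    by_cases hv : v ∈ S
    · exact congrFun (LinearMap.mem_ker.mp ha) ⟨v, hv⟩
    · simp [Φ, Fintype.linearCombination_apply, map_sum, Finset.sum_apply, hL _ v hv]
  have hker := Submodule.finrank_mono hmap
  rw [← (Submodule.equivMapOfInjective Φ hΦ (LinearMap.ker F)).finrank_eq] at hker
  rw [Module.finrank_fintype_fun_eq_card] at hrn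
  omega

/-- An `α`-eigenvector of `H`, transported to a component of `T - S` isomorphic to `H` and extended
by zero, is supported on that component and satisfies the eigenvalue equation outside `S`. -/
theorem exists_extended_eigenvector {V W : Type} [Fintype V] [Fintype W] (T : SimpleGraph V)
    (H : SimpleGraph W) [DecidableRel T.Adj] [DecidableRel H.Adj] (α : ℝ) (x : W → ℝ) (hx0 : x ≠ 0)
    (hx : ∀ w, (H.adjMatrix ℝ).mulVec x w = α * x w) (S : Finset V)
    (c : (T.induce ((↑S : Set V)ᶜ)).ConnectedComponent)
    (φ : ((T.induce ((↑S : Set V)ᶜ)).induce c.supp) ≃g H) :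
    ∃ y : V → ℝ,
      (∃ v : ((↑S : Set V)ᶜ : Set V),
        (T.induce ((↑S : Set V)ᶜ)).connectedComponentMk v = c ∧ y v ≠ 0) ∧
      (∀ v : ((↑S : Set V)ᶜ : Set V),
        (T.induce ((↑S : Set V)ᶜ)).connectedComponentMk v ≠ c → y v = 0) ∧
      ∀ v ∉ S, (T.adjMatrix ℝ).mulVec y v = α * y v := by
  let e : W → V := fun w => (φ.symm w).1.1
  have he : Function.Injective e := fun a b h =>
    φ.symm.injective (Subtype.ext (Subtype.ext h))
  have hadj : ∀ a b, T.Adj (e a) (e b) ↔ H.Adj a b := fun a b => φ.symm.map_rel_iff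
  have hrange : ∀ v : ((↑S : Set V)ᶜ : Set V),
      (T.induce ((↑S : Set V)ᶜ)).connectedComponentMk v = c → ∃ w, e w = v := fun v hv =>
    ⟨φ ⟨v, hv⟩, congrArg (fun u => u.1.1) (φ.symm_apply_apply ⟨v, hv⟩)⟩
  have hye : ∀ w, Function.extend e x (0 : V → ℝ) (e w) = x w := he.extend_apply x _
  have hy0 : ∀ v, (¬ ∃ w, e w = v) → Function.extend e x (0 : V → ℝ) v = 0 := fun v hv =>
    Function.extend_apply' x _ v hv
  have hsum : ∀ v, (T.adjMatrix ℝ).mulVec (Function.extend e x (0 : V → ℝ)) v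
      = ∑ w, T.adjMatrix ℝ v (e w) * x w := by
    intro v
    symm
    refine Fintype.sum_of_injective e he _ _ (fun u hu => ?_) (fun w => ?_)
    · rw [hy0 u hu, mul_zero]
    · rw [hye]
  refine ⟨Function.extend e x (0 : V → ℝ), ?_, ?_, ?_⟩
  · obtain ⟨w, hw⟩ := Function.ne_iff.mp hx0
    refine ⟨(φ.symm w).1, (φ.symm w).2, ?_⟩
    have := hye w
    simp only [e] at this ⊢
    rw [this]
    exact hw
  · intro v hv
    refine hy0 _ ?_
    rintro ⟨w, hw⟩
    have h : (φ.symm w).1 = v := Subtype.ext hw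
    exact hv (h ▸ (φ.symm w).2)
  · intro v hv
    rw [hsum]
    by_cases h : ∃ w, e w = v
    · obtain ⟨w, rfl⟩ := h
      rw [hye, ← hx w]
      refine Finset.sum_congr rfl fun b _ => ?_
      simp only [SimpleGraph.adjMatrix_apply, hadj]
    · rw [hy0 v h, mul_zero]
      refine Finset.sum_eq_zero fun b _ => ?_
      have hn : ¬ T.Adj v (e b) := by
        intro hvb
        refine h (hrange ⟨v, by simpa using hv⟩ ?_)
        have hb := (φ.symm b).2
        rw [SimpleGraph.ConnectedComponent.mem_supp_iff] at hb
        rw [← hb]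
        refine SimpleGraph.ConnectedComponent.sound (SimpleGraph.Adj.reachable ?_)
        exact hvb
      simp [hn]

/-- If deleting a set `S` of `l` vertices from a finite graph `T` leaves at least `K`
connected components whose induced subgraphs are isomorphic to a graph `H` having `α`
as an adjacency eigenvalue, then `N_α(T) ≥ K - l`. -/
theorem stmt5 {V W : Type} [Finite V] [Finite W] (T : SimpleGraph V) (H : SimpleGraph W)
    (α : ℝ) (hα : 1 ≤ adjMult H α) (S : Finset V) (l K : ℕ) (hS : S.card = l)
    (C : Finset ((T.induce ((↑S : Set V)ᶜ)).ConnectedComponent)) (hK : K ≤ C.card)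
    (hiso : ∀ c ∈ C, Nonempty (((T.induce ((↑S : Set V)ᶜ)).induce c.supp) ≃g H)) :
    (K : ℤ) - (l : ℤ) ≤ (adjMult T α : ℤ) := by
  classical
  let := Fintype.ofFinite V
  let := Fintype.ofFinite W
  obtain ⟨x, hx, hx0⟩ : ∃ x : W → ℝ, (∀ w, (H.adjMatrix ℝ).mulVec x w = α * x w) ∧ x ≠ 0 := by
    unfold adjMult eigMult at hα
    obtain ⟨⟨x, hx⟩, hx0⟩ := Module.finrank_pos_iff_exists_ne_zero.mp hα
    refine ⟨x, fun w => ?_, fun h => hx0 (Subtype.ext h)⟩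
    have h := congrFun (LinearMap.mem_ker.mp hx) w
    simp only [Matrix.mulVecLin_apply, Matrix.sub_mulVec, Matrix.smul_mulVec, Matrix.one_mulVec,
      Pi.sub_apply, Pi.smul_apply, smul_eq_mul, Pi.zero_apply, sub_eq_zero] at h
    convert h
  have hex := fun c : C => exists_extended_eigenvector T H α x hx0 hx S c.1 (hiso c.1 c.2).some
  choose y hne hsupp heig using hex
  have hli : LinearIndependent ℝ y := by
    rw [Fintype.linearIndependent_iff]
    intro a ha c
    obtain ⟨v, hvc, hv⟩ := hne c
    have h := congrFun ha v
    rw [Finset.sum_apply, Finset.sum_eq_single c] at h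
    · simpa [hv] using h
    · intro d _ hd
      have : y d v = 0 := hsupp d v fun h => hd (Subtype.ext (h.symm.trans hvc))
      simp [this]
    · simp
  have key := card_sub_card_le_finrank_ker S
    (T.adjMatrix ℝ - α • (1 : Matrix V V ℝ)).mulVecLin y hli (fun c v hv => by
      simp [heig c v hv])
  have hT : adjMult T α
      = Module.finrank ℝ (LinearMap.ker (T.adjMatrix ℝ - α • (1 : Matrix V V ℝ)).mulVecLin) := by
    unfold adjMult eigMult
    congr!
  rw [Fintype.card_coe] at key
  omega
end

section
/- Let T be a finite tree, let l(T) be the number of leaves of T (vertices of degree 1), and let q(T) be the number of quasipendant vertices of T (vertices adjacent to at least one leaf). Then the multiplicity of the eigenvalue 0 of the adjacency matrix of T satisfies N_0(T) ≥ l(T) − q(T). -/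
/-- If the columns of `A` indexed by `L` vanish outside the rows indexed by `Q`, then the
kernel of `A` has dimension at least `|L| - |Q|`. -/
lemma card_sub_card_le_finrank_ker_s6 {V : Type} [Fintype V] (A : Matrix V V ℝ) (L Q : Finset V)
    (h : ∀ v ∉ Q, ∀ u ∈ L, A v u = 0) :
    L.card ≤ Q.card + Module.finrank ℝ (LinearMap.ker A.mulVecLin) := by
  classical
  -- `E` is extension by zero from `L` to `V`, and `B` is the block of `A` with rows `Q`, columns `L`.
  let E : (L → ℝ) →ₗ[ℝ] (V → ℝ) := Function.ExtendByZero.linearMap ℝ (Subtype.val : L → V)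
  let B : (L → ℝ) →ₗ[ℝ] (Q → ℝ) :=
    LinearMap.funLeft ℝ ℝ (Subtype.val : Q → V) ∘ₗ A.mulVecLin ∘ₗ E
  have hE_mem (x : L → ℝ) (u : L) : E x u = x u := Subtype.val_injective.extend_apply x 0 u
  have hE_notMem (x : L → ℝ) (u : V) (hu : u ∉ L) : E x u = 0 :=
    Function.extend_apply' (f := Subtype.val) x (0 : V → ℝ) u (by rintro ⟨a, rfl⟩; exact hu a.2)
  have hE : Function.Injective E := fun x y hxy => by
    ext u
    rw [← hE_mem x u, ← hE_mem y u, hxy]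
  have hle : (LinearMap.ker B).map E ≤ LinearMap.ker A.mulVecLin := by
    rintro _ ⟨x, hx, rfl⟩
    rw [LinearMap.mem_ker]
    ext v
    by_cases hv : v ∈ Q
    · exact congrFun (LinearMap.mem_ker.1 hx) ⟨v, hv⟩
    · refine Finset.sum_eq_zero fun u _ => ?_
      by_cases hu : u ∈ L
      · simp [h v hv u hu]
      · simp [hE_notMem x u hu]
  have hker := Submodule.finrank_mono hle
  rw [← (Submodule.equivMapOfInjective E hE _).finrank_eq] at hker
  have hrn := B.finrank_range_add_finrank_ker
  have hrange := (LinearMap.range B).finrank_le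
  simp only [Module.finrank_fintype_fun_eq_card, Fintype.card_coe] at hrn hrange
  omega

lemma eigMult_zero {I : Type} [Fintype I] (M : Matrix I I ℝ) :
    eigMult M 0 = Module.finrank ℝ (LinearMap.ker M.mulVecLin) := by
  classical
  unfold eigMult
  rw [zero_smul, sub_zero]

lemma adjMult_zero {V : Type} [Fintype V] (G : SimpleGraph V) [DecidableRel G.Adj] :
    adjMult G 0 = Module.finrank ℝ (LinearMap.ker (G.adjMatrix ℝ).mulVecLin) := by
  rw [← eigMult_zero]
  unfold adjMult
  congr!

/-- For a finite tree `T`, the multiplicity of the eigenvalue `0` of the adjacency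
matrix is at least `l(T) - q(T)`, where `l(T)` is the number of leaves and `q(T)` the
number of quasipendant vertices (vertices adjacent to at least one leaf). -/
theorem stmt6 {V : Type} [Fintype V] [DecidableEq V] (T : SimpleGraph V)
    [DecidableRel T.Adj] (hT : T.IsTree) :
    ((Finset.univ.filter fun v : V => T.degree v = 1).card : ℤ) -
      ((Finset.univ.filter fun v : V => ∃ u, T.Adj v u ∧ T.degree u = 1).card : ℤ)
      ≤ (adjMult T 0 : ℤ) := by
  have key := card_sub_card_le_finrank_ker_s6 (T.adjMatrix ℝ)
    (Finset.univ.filter fun v : V => T.degree v = 1)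
    (Finset.univ.filter fun v : V => ∃ u, T.Adj v u ∧ T.degree u = 1) (by
      intro v hv u hu
      simp only [Finset.mem_filter, Finset.mem_univ, true_and] at hv hu
      rw [SimpleGraph.adjMatrix_apply, if_neg fun hvu => hv ⟨u, hvu, hu⟩])
  rw [adjMult_zero]
  omega
end

section
/- Let T be a finite tree and let r be any vertex of T. Then N_0(T) − N_0(T − r) ∈ {−1, 1}; that is, the multiplicity of the eigenvalue 0 of the adjacency matrix changes by exactly 1 (never by 0) when the vertex r is deleted from T. -/
open Matrix

/-- The vectors on `V` which vanish at `r` and which `A` maps to a multiple of `e_r`: the kernel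
of `A` with row and column `r` deleted, extended by zero. -/
def deletedKer {V : Type} [Fintype V] (A : Matrix V V ℝ) (r : V) : Submodule ℝ (V → ℝ) where
  carrier := {x | x r = 0 ∧ ∀ i, i ≠ r → (A *ᵥ x) i = 0}
  add_mem' := by
    rintro x y ⟨hx, hx'⟩ ⟨hy, hy'⟩
    refine ⟨by simp [hx, hy], fun i hi => ?_⟩
    rw [mulVec_add, Pi.add_apply, hx' i hi, hy' i hi, add_zero]
  zero_mem' := ⟨rfl, fun i _ => by simp⟩
  smul_mem' := by
    rintro a x ⟨hx, hx'⟩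
    refine ⟨by simp [hx], fun i hi => ?_⟩
    rw [mulVec_smul, Pi.smul_apply, hx' i hi, smul_zero]

lemma finrank_functional {E : Type} [AddCommGroup E] [Module ℝ E] [FiniteDimensional ℝ E]
    (p : Submodule ℝ E) (f : E →ₗ[ℝ] ℝ) :
    ((∀ x ∈ p, f x = 0) →
      Module.finrank ℝ p = Module.finrank ℝ (p ⊓ LinearMap.ker f : Submodule ℝ E)) ∧
    ((∃ x ∈ p, f x ≠ 0) →
      Module.finrank ℝ p = Module.finrank ℝ (p ⊓ LinearMap.ker f : Submodule ℝ E) + 1) := by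
  constructor
  · intro h
    have : p ⊓ LinearMap.ker f = p := inf_eq_left.mpr fun x hx => by simpa using h x hx
    rw [this]
  · rintro ⟨x, hx, hfx⟩
    have hne : f.domRestrict p ≠ 0 := fun h => hfx (by
      simpa using LinearMap.congr_fun h ⟨x, hx⟩)
    have hs := LinearMap.range_eq_top.mpr (LinearMap.surjective hne)
    have h1 := LinearMap.finrank_range_add_finrank_ker (f.domRestrict p)
    rw [hs, finrank_top, Module.finrank_self] at h1
    have h2 : Module.finrank ℝ (LinearMap.ker (f.domRestrict p)) =
        Module.finrank ℝ (p ⊓ LinearMap.ker f : Submodule ℝ E) := by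
      have h3 : (LinearMap.ker (f.domRestrict p)).map p.subtype = p ⊓ LinearMap.ker f := by
        ext y
        simp [Submodule.mem_map, and_comm]
      rw [← h3, LinearEquiv.finrank_eq
        (Submodule.equivMapOfInjective p.subtype p.injective_subtype _)]
    omega

lemma mulVec_submatrix_compl {V : Type} [Fintype V] (A : Matrix V V ℝ) (r : V)
    [Fintype ({r}ᶜ : Set V)] (x : V → ℝ) (hx : x r = 0) (i : ({r}ᶜ : Set V)) :
    (A.submatrix (Subtype.val : ({r}ᶜ : Set V) → V) (Subtype.val : ({r}ᶜ : Set V) → V) *ᵥ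
      fun j => x j) i
      = (A *ᵥ x) i := by
  classical
  simp only [mulVec, dotProduct, submatrix_apply]
  rw [← Finset.sum_erase (a := r) Finset.univ (f := fun j => A i j * x j) (by simp [hx])]
  exact (Finset.sum_subtype (p := fun j => j ∈ ({r}ᶜ : Set V)) (Finset.univ.erase r) (by simp)
    (fun j => A i j * x j)).symm

lemma finrank_deletedKer {V : Type} [Fintype V] (A : Matrix V V ℝ) (r : V)
    [Fintype ({r}ᶜ : Set V)] :
    Module.finrank ℝ (LinearMap.ker
      (A.submatrix (Subtype.val : ({r}ᶜ : Set V) → V)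
        (Subtype.val : ({r}ᶜ : Set V) → V)).mulVecLin) =
    Module.finrank ℝ (deletedKer A r) := by
  classical
  set B := A.submatrix (Subtype.val : ({r}ᶜ : Set V) → V) (Subtype.val : ({r}ᶜ : Set V) → V)
  have key : (deletedKer A r).map (LinearMap.funLeft ℝ ℝ (Subtype.val : ({r}ᶜ : Set V) → V)) =
      LinearMap.ker B.mulVecLin := by
    ext y
    simp only [Submodule.mem_map, LinearMap.mem_ker, mulVecLin_apply]
    constructor
    · rintro ⟨x, ⟨hx, hx'⟩, rfl⟩
      ext i
      exact (mulVec_submatrix_compl A r x hx i).trans (hx' i i.2)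
    · intro hy
      let x : V → ℝ := fun j => if h : j = r then 0 else y ⟨j, h⟩
      have hxr : x r = 0 := by simp [x]
      have hxy : (fun j : ({r}ᶜ : Set V) => x j) = y := by
        ext j
        have : (j : V) ≠ r := j.2
        simp [x, this]
      refine ⟨x, ⟨hxr, fun i hi => ?_⟩, hxy⟩
      rw [← mulVec_submatrix_compl A r x hxr ⟨i, hi⟩, hxy]
      exact congrFun hy _
  rw [← key]
  refine (LinearEquiv.finrank_eq (LinearEquiv.ofBijective
    (((LinearMap.funLeft ℝ ℝ (Subtype.val : ({r}ᶜ : Set V) → V))).submoduleMap (deletedKer A r))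
    ⟨?_, LinearMap.submoduleMap_surjective _ _⟩)).symm
  rintro ⟨x, hx⟩ ⟨y, hy⟩ h
  ext j
  by_cases hj : j = r
  · subst hj
    exact hx.1.trans hy.1.symm
  · exact congrFun (congrArg Subtype.val h) ⟨j, hj⟩

lemma dot_symm {V : Type} [Fintype V] {A : Matrix V V ℝ} (hA : A.IsSymm) (x z : V → ℝ) :
    x ⬝ᵥ (A *ᵥ z) = (A *ᵥ x) ⬝ᵥ z := by
  rw [dotProduct_mulVec, ← mulVec_transpose, hA.eq]

/-- For a symmetric matrix, a coordinate vector outside the range is detected by the kernel. -/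
lemma exists_ker_of_notMem_range {V : Type} [Fintype V] [DecidableEq V] {A : Matrix V V ℝ}
    (hA : A.IsSymm) (r : V) (h : ¬ ∃ z, A *ᵥ z = Pi.single r 1) :
    ∃ x, A *ᵥ x = 0 ∧ x r ≠ 0 := by
  have h' : (Pi.single r 1 : V → ℝ) ∉ LinearMap.range A.mulVecLin := by
    simpa using h
  obtain ⟨f, hf, hle⟩ := Submodule.exists_le_ker_of_notMem h'
  have hfx : ∀ x, f x = (fun i => f (Pi.single i 1)) ⬝ᵥ x := by
    intro x
    rw [LinearMap.pi_apply_eq_sum_univ f x]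
    simp only [dotProduct, smul_eq_mul]
    refine Finset.sum_congr rfl fun i _ => ?_
    rw [mul_comm]
    congr 2
    ext j
    simp [Pi.single_apply, eq_comm]
  refine ⟨fun i => f (Pi.single i 1), ?_, hf⟩
  refine dotProduct_eq_zero _ fun z => ?_
  rw [← dot_symm hA, ← hfx]
  exact hle ⟨z, rfl⟩

/-- Exactly one of the functionals `x ↦ x r` on `ker A` and `x ↦ (A x) r` on `deletedKer A r` is
nonzero, if `A` is symmetric and bipartite. -/
lemma exactly_one {V : Type} [Fintype V] {A : Matrix V V ℝ} (hA : A.IsSymm)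
    (c : V → Fin 2) (hc : ∀ i j, A i j ≠ 0 → c i ≠ c j) (r : V) :
    (∃ x, A *ᵥ x = 0 ∧ x r ≠ 0) ↔ ¬ ∃ x ∈ deletedKer A r, (A *ᵥ x) r ≠ 0 := by
  classical
  constructor
  · rintro ⟨x, hx, hxr⟩ ⟨z, ⟨-, hz'⟩, hzr⟩
    have h1 := dot_symm hA x z
    rw [hx, zero_dotProduct, dotProduct, Finset.sum_eq_single r
      (fun i _ hi => by rw [hz' i hi, mul_zero]) (by simp)] at h1
    exact mul_ne_zero hxr hzr h1
  · intro h
    refine exists_ker_of_notMem_range hA r ?_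
    rintro ⟨z, hz⟩
    -- The truncation of `z` to the side opposite to `r` still solves `A z = e_r`.
    let w : V → ℝ := fun j => if c j = c r then 0 else z j
    have hw1 : ∀ i, c i = c r → (A *ᵥ w) i = (A *ᵥ z) i := by
      intro i hi
      simp only [mulVec, dotProduct]
      refine Finset.sum_congr rfl fun j _ => ?_
      by_cases hij : A i j = 0
      · simp [hij]
      · have : c j ≠ c r := fun h => hc i j hij (hi.trans h.symm)
        simp [w, this]
    have hw2 : ∀ i, c i ≠ c r → (A *ᵥ w) i = 0 := by
      intro i hi
      simp only [mulVec, dotProduct]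
      refine Finset.sum_eq_zero fun j _ => ?_
      by_cases hij : A i j = 0
      · simp [hij]
      · have : c j = c r := by
          have := hc i j hij
          omega
        simp [w, this]
    refine h ⟨w, ⟨by simp [w], fun i hi => ?_⟩, ?_⟩
    · by_cases hci : c i = c r
      · rw [hw1 i hci, hz]
        simp [hi]
      · exact hw2 i hci
    · rw [hw1 r rfl, hz]
      simp

theorem finrank_bipartite {V : Type} [Fintype V] {A : Matrix V V ℝ} (hA : A.IsSymm)
    (c : V → Fin 2) (hc : ∀ i j, A i j ≠ 0 → c i ≠ c j) (r : V) :
    Module.finrank ℝ (LinearMap.ker A.mulVecLin) = Module.finrank ℝ (deletedKer A r) + 1 ∨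
    Module.finrank ℝ (deletedKer A r) = Module.finrank ℝ (LinearMap.ker A.mulVecLin) + 1 := by
  have h1 := finrank_functional (LinearMap.ker A.mulVecLin) (LinearMap.proj r)
  have h2 := finrank_functional (deletedKer A r) (LinearMap.proj r ∘ₗ A.mulVecLin)
  have h3 : LinearMap.ker A.mulVecLin ⊓ LinearMap.ker (LinearMap.proj r : (V → ℝ) →ₗ[ℝ] ℝ) =
      deletedKer A r ⊓ LinearMap.ker (LinearMap.proj r ∘ₗ A.mulVecLin) := by
    ext x
    simp only [Submodule.mem_inf, LinearMap.mem_ker, mulVecLin_apply, LinearMap.proj_apply,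
      LinearMap.comp_apply]
    constructor
    · rintro ⟨hx, hxr⟩
      exact ⟨⟨hxr, fun i _ => congrFun hx i⟩, congrFun hx r⟩
    · rintro ⟨⟨hxr, hx⟩, hr⟩
      refine ⟨funext fun i => ?_, hxr⟩
      by_cases hi : i = r
      · rw [hi]; exact hr
      · exact hx i hi
  rw [← h3] at h2
  simp only [LinearMap.mem_ker, mulVecLin_apply, LinearMap.proj_apply,
      LinearMap.comp_apply] at h1 h2
  have h4 := exactly_one hA c hc r
  by_cases h : ∃ x ∈ deletedKer A r, (A *ᵥ x) r ≠ 0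
  · right
    have h5 : ∀ x, A *ᵥ x = 0 → x r = 0 := fun x hx => by
      by_contra hn
      exact h4.mp ⟨x, hx, hn⟩ h
    rw [h1.1 h5, h2.2 h]
  · left
    rw [h1.2 (h4.mpr h), h2.1 (by push Not at h; exact h)]

/-- For a finite tree `T` and any vertex `r`, the multiplicity of the eigenvalue `0`
of the adjacency matrix changes by exactly `1` (never by `0`) when `r` is deleted:
`N_0(T) - N_0(T - r) ∈ {-1, 1}`. -/
theorem stmt7 {V : Type} [Finite V] (T : SimpleGraph V) (hT : T.IsTree) (r : V) :
    (adjMult T 0 : ℤ) - (adjMult (T.induce ({r}ᶜ : Set V)) 0 : ℤ) = 1 ∨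
    (adjMult T 0 : ℤ) - (adjMult (T.induce ({r}ᶜ : Set V)) 0 : ℤ) = -1 := by
  let := Fintype.ofFinite V
  let := Fintype.ofFinite ({r}ᶜ : Set V)
  let := Classical.decRel T.Adj
  let := Classical.decRel (T.induce ({r}ᶜ : Set V)).Adj
  have hsub : (T.induce ({r}ᶜ : Set V)).adjMatrix ℝ =
      (T.adjMatrix ℝ).submatrix Subtype.val Subtype.val := by
    ext i j
    simp [SimpleGraph.adjMatrix_apply]
  have e1 : adjMult T 0 = Module.finrank ℝ (LinearMap.ker (T.adjMatrix ℝ).mulVecLin) := by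
    unfold adjMult eigMult
    rw [zero_smul, sub_zero]
  have e2 : adjMult (T.induce ({r}ᶜ : Set V)) 0 =
      Module.finrank ℝ (deletedKer (T.adjMatrix ℝ) r) := by
    rw [← finrank_deletedKer, ← hsub]
    unfold adjMult eigMult
    rw [zero_smul, sub_zero]
  obtain ⟨c⟩ := hT.isBipartite
  have := finrank_bipartite (T.isSymm_adjMatrix (α := ℝ)) c
    (fun i j hij => c.valid (by simpa [SimpleGraph.adjMatrix_apply] using hij)) r
  omega
end

section
/- Let T be a finite tree on n vertices and let m(T) be its matching number, i.e., the maximum cardinality of a set of pairwise disjoint edges of T. Then the multiplicity of the eigenvalue 0 of the adjacency matrix of T equals n − 2·m(T). -/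
/-- The matching number of a graph: the maximum cardinality of a set of pairwise
disjoint edges. -/
noncomputable def matchNum {V : Type} (G : SimpleGraph V) : ℕ :=
  sSup {k | ∃ M : Finset (Sym2 V), (∀ e ∈ M, e ∈ G.edgeSet) ∧
    (∀ e ∈ M, ∀ f ∈ M, e ≠ f → ∀ v : V, v ∈ e → v ∉ f) ∧ M.card = k}

/-- The set whose supremum is `matchNum G` contains that supremum and is bounded by it. -/
lemma matchNum_isGreatest {V : Type} [Finite V] (G : SimpleGraph V) :
    IsGreatest {k | ∃ M : Finset (Sym2 V), (∀ e ∈ M, e ∈ G.edgeSet) ∧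
      (∀ e ∈ M, ∀ f ∈ M, e ≠ f → ∀ v : V, v ∈ e → v ∉ f) ∧ M.card = k} (matchNum G) := by
  classical
  have := Fintype.ofFinite V
  have hb : BddAbove {k | ∃ M : Finset (Sym2 V), (∀ e ∈ M, e ∈ G.edgeSet) ∧
      (∀ e ∈ M, ∀ f ∈ M, e ≠ f → ∀ v : V, v ∈ e → v ∉ f) ∧ M.card = k} := by
    refine ⟨Fintype.card (Sym2 V), ?_⟩
    rintro k ⟨M, -, -, rfl⟩
    exact Finset.card_le_univ M
  have hne : {k | ∃ M : Finset (Sym2 V), (∀ e ∈ M, e ∈ G.edgeSet) ∧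
      (∀ e ∈ M, ∀ f ∈ M, e ≠ f → ∀ v : V, v ∈ e → v ∉ f) ∧ M.card = k}.Nonempty :=
    ⟨0, ∅, by simp, by simp, by simp⟩
  exact ⟨Nat.sSup_mem hne hb, fun k hk => le_csSup hb hk⟩

/-- A finite forest with at least one edge has a leaf: the endpoint of a longest path. -/
lemma exists_leaf {V : Type} [Finite V] (G : SimpleGraph V) (hG : G.IsAcyclic) (hne : G ≠ ⊥) :
    ∃ l v, G.Adj l v ∧ ∀ w, G.Adj l w → w = v := by
  classical
  have := Fintype.ofFinite V
  obtain ⟨a, b, hab⟩ := G.ne_bot_iff_exists_adj.mp hne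
  let S : Set ℕ := {n | ∃ (u w : V) (p : G.Walk u w), p.IsPath ∧ p.length = n}
  have hS : BddAbove S := by
    refine ⟨Fintype.card V, ?_⟩
    rintro n ⟨u, w, p, hp, rfl⟩
    exact hp.length_lt.le
  have h1 : 1 ∈ S := ⟨a, b, hab.toWalk, by simp [hab.ne], by simp⟩
  obtain ⟨u, w, p, hp, hlen⟩ := Nat.sSup_mem ⟨1, h1⟩ hS
  have hpos : 1 ≤ p.length := hlen ▸ le_csSup hS h1
  have hnil : ¬ p.Nil := by
    rw [← SimpleGraph.Walk.length_eq_zero_iff]; omega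
  refine ⟨u, p.snd, p.adj_snd hnil, fun x hx => ?_⟩
  by_cases hxs : x ∈ p.support
  · exact hG.eq_snd_of_adj_start hp hx hxs
  · -- otherwise the path could be prolonged at `u`
    have : p.length + 1 ∈ S := ⟨x, w, .cons hx.symm p, by simp [hp, hxs], by simp⟩
    have := le_csSup hS this
    omega

lemma matchNum_eq {V : Type} [Finite V] [DecidableEq V] (G : SimpleGraph V) {l v : V}
    (hlv : G.Adj l v) (hl : ∀ w, G.Adj l w → w = v) :
    matchNum G = matchNum (G.deleteIncidenceSet v) + 1 := by
  apply le_antisymm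
  · obtain ⟨M, hM, hd, hc⟩ := (matchNum_isGreatest G).1
    have h1 : (M.filter (fun e => v ∉ e)).card ≤ matchNum (G.deleteIncidenceSet v) := by
      refine (matchNum_isGreatest _).2 ⟨_, ?_, ?_, rfl⟩
      · intro e he
        rw [Finset.mem_filter] at he
        rw [SimpleGraph.edgeSet_deleteIncidenceSet]
        exact ⟨hM e he.1, fun h => he.2 h.2⟩
      · intro e he f hf
        exact hd e (Finset.mem_filter.1 he).1 f (Finset.mem_filter.1 hf).1
    have h2 : (M.filter (fun e => v ∈ e)).card ≤ 1 := by
      rw [Finset.card_le_one]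
      intro e he f hf
      rw [Finset.mem_filter] at he hf
      by_contra hef
      exact hd e he.1 f hf.1 hef v he.2 hf.2
    have h3 := Finset.card_filter_add_card_filter_not (s := M) (fun e => v ∈ e)
    omega
  · obtain ⟨M, hM, hd, hc⟩ := (matchNum_isGreatest (G.deleteIncidenceSet v)).1
    have hMG : ∀ e ∈ M, e ∈ G.edgeSet ∧ v ∉ e := by
      intro e he
      have := hM e he
      rw [SimpleGraph.edgeSet_deleteIncidenceSet] at this
      exact ⟨this.1, fun h => this.2 ⟨this.1, h⟩⟩
    have hMl : ∀ e ∈ M, l ∉ e := by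
      intro e he hle
      obtain ⟨w, rfl⟩ := hle
      have h := hMG _ he
      exact h.2 (by rw [hl w h.1]; simp)
    refine (matchNum_isGreatest G).2 ⟨insert s(l, v) M, ?_, ?_, ?_⟩
    · intro e he
      rcases Finset.mem_insert.1 he with rfl | he
      · exact hlv
      · exact (hMG e he).1
    · intro e he f hf hef x hxe hxf
      rw [Finset.mem_insert] at he hf
      rcases he with rfl | he <;> rcases hf with rfl | hf
      · exact hef rfl
      · rcases Sym2.mem_iff.1 hxe with rfl | rfl
        · exact hMl f hf hxf
        · exact (hMG f hf).2 hxf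
      · rcases Sym2.mem_iff.1 hxf with rfl | rfl
        · exact hMl e he hxe
        · exact (hMG e he).2 hxe
      · exact hd e he f hf hef x hxe hxf
    · rw [Finset.card_insert_of_notMem, hc]
      exact fun h => hMl _ h (by simp)

open Classical in
/-- The kernel of the adjacency matrix: vectors whose sum over every neighbourhood vanishes. -/
noncomputable def adjKer {V : Type} [Fintype V] (G : SimpleGraph V) : Submodule ℝ (V → ℝ) :=
  LinearMap.ker (G.adjMatrix ℝ).mulVecLin

lemma mem_adjKer {V : Type} [Fintype V] (G : SimpleGraph V) [DecidableRel G.Adj] (x : V → ℝ) :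
    x ∈ adjKer G ↔ ∀ a, ∑ b, (if G.Adj a b then x b else 0) = 0 := by
  simp [adjKer, LinearMap.mem_ker, funext_iff, Matrix.mulVec, dotProduct,
    SimpleGraph.adjMatrix_apply]

lemma adjMult_zero_s9 {V : Type} [Finite V] (G : SimpleGraph V) :
    letI := Fintype.ofFinite V
    adjMult G 0 = Module.finrank ℝ (adjKer G) := by
  simp only [adjMult, eigMult, adjKer]
  rw [zero_smul, sub_zero]
  congr!

lemma adjMult_eq {V : Type} [Finite V] [DecidableEq V] (G : SimpleGraph V) {l v : V}
    (hlv : G.Adj l v) (hl : ∀ w, G.Adj l w → w = v) :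
    adjMult (G.deleteIncidenceSet v) 0 = adjMult G 0 + 2 := by
  classical
  rw [adjMult_zero_s9, adjMult_zero_s9]
  let := Fintype.ofFinite V
  set G' := G.deleteIncidenceSet v with hG'
  have hadj : ∀ a b, G'.Adj a b ↔ G.Adj a b ∧ a ≠ v ∧ b ≠ v := fun a b =>
    SimpleGraph.deleteIncidenceSet_adj
  -- the equations of `G` at `l` and at `v`
  let φ : (V → ℝ) →ₗ[ℝ] ℝ × ℝ := LinearMap.prod (LinearMap.proj v)
    (∑ b, if G.Adj v b then LinearMap.proj b else 0)
  have hφ : ∀ x, φ x = (x v, ∑ b, if G.Adj v b then x b else 0) := by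
    intro x
    simp only [φ, LinearMap.prod_apply, Function.prod_apply, LinearMap.proj_apply,
      LinearMap.sum_apply]
    congr 1
    refine Finset.sum_congr rfl fun b _ => ?_
    split_ifs <;> simp
  have hker : (LinearMap.ker (φ.domRestrict (adjKer G'))).map (adjKer G').subtype = adjKer G := by
    ext x
    have h1 : x ∈ (LinearMap.ker (φ.domRestrict (adjKer G'))).map (adjKer G').subtype ↔
        x ∈ adjKer G' ∧ φ x = 0 := by
      simp [Submodule.mem_map, and_comm]
    -- once `x v = 0`, deleting `v` does not affect the equations at the other vertices
    have key : x v = 0 → ∀ a, a ≠ v → ∑ b, (if G'.Adj a b then x b else 0) =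
        ∑ b, (if G.Adj a b then x b else 0) := by
      intro hx a ha
      refine Finset.sum_congr rfl fun b _ => ?_
      by_cases hb : b = v
      · subst hb; simp [hx]
      · simp [hadj, ha, hb]
    rw [h1, mem_adjKer, mem_adjKer, hφ, Prod.mk_eq_zero]
    constructor
    · rintro ⟨hx, hv, hs⟩ a
      by_cases ha : a = v
      · rw [ha]; exact hs
      · rw [← key hv a ha]; exact hx a
    · intro hx
      have hv : x v = 0 := by
        have h := hx l
        rw [Finset.sum_eq_single v] at h
        · simpa [hlv] using h
        · intro b _ hb
          exact if_neg fun h => hb (hl b h)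
        · simp
      refine ⟨fun a => ?_, hv, hx v⟩
      by_cases ha : a = v
      · simp [hadj, ha]
      · rw [key hv a ha]; exact hx a
  have hiso : ∀ c, (∀ a, ¬ G'.Adj a c) → Pi.single c 1 ∈ adjKer G' := by
    intro c hc
    rw [mem_adjKer]
    intro a
    refine Finset.sum_eq_zero fun b _ => ?_
    by_cases hb : b = c
    · subst hb; simp [hc]
    · simp [hb]
  have hev := hiso v (by simp [hadj])
  have hel := hiso l (by
    intro a h
    rw [hadj] at h
    exact h.2.1 (hl a h.1.symm))
  have hsurj : Function.Surjective (φ.domRestrict (adjKer G')) := by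
    rintro ⟨s, t⟩
    refine ⟨s • ⟨_, hev⟩ + t • ⟨_, hel⟩, ?_⟩
    have e1 : φ (Pi.single v 1) = (1, 0) := by
      rw [hφ]
      refine Prod.ext (by simp) (Finset.sum_eq_zero fun b _ => ?_)
      by_cases hb : b = v
      · subst hb; simp
      · simp [hb]
    have e2 : φ (Pi.single l 1) = (0, 1) := by
      rw [hφ]
      refine Prod.ext (by simp [hlv.ne']) ?_
      rw [Finset.sum_eq_single l]
      · simp [hlv.symm]
      · intro b _ hb
        simp [hb]
      · simp
    rw [map_add, map_smul, map_smul, LinearMap.domRestrict_apply, LinearMap.domRestrict_apply,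
      e1, e2]
    simp
  have hrn := LinearMap.finrank_range_add_finrank_ker (φ.domRestrict (adjKer G'))
  rw [LinearMap.range_eq_top.2 hsurj, finrank_top, Module.finrank_prod, Module.finrank_self] at hrn
  have hfin : Module.finrank ℝ (adjKer G) =
      Module.finrank ℝ (LinearMap.ker (φ.domRestrict (adjKer G'))) := by
    rw [← hker]
    exact Submodule.finrank_map_subtype_eq _ _
  omega

/-- The forest version of the theorem, in which the leaf-peeling induction can be run. -/
lemma forest_nullity {V : Type} [Finite V] (G : SimpleGraph V) (hG : G.IsAcyclic) :
    adjMult G 0 + 2 * matchNum G = Nat.card V := by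
  classical
  induction G using WellFoundedLT.induction with
  | ind G ih =>
  by_cases hne : G = ⊥
  · subst hne
    have hm : matchNum (⊥ : SimpleGraph V) = 0 := by
      obtain ⟨M, hM, -, hc⟩ := (matchNum_isGreatest (⊥ : SimpleGraph V)).1
      rw [← hc, Finset.card_eq_zero, Finset.eq_empty_iff_forall_notMem]
      intro e he
      simpa using hM e he
    rw [adjMult_zero_s9, hm]
    let := Fintype.ofFinite V
    have : adjKer (⊥ : SimpleGraph V) = ⊤ := by
      ext x
      simp [mem_adjKer]
    rw [this, finrank_top, Module.finrank_fintype_fun_eq_card, Nat.card_eq_fintype_card,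
      mul_zero, add_zero]
  · obtain ⟨l, v, hlv, hl⟩ := exists_leaf G hG hne
    have hle : G.deleteIncidenceSet v ≤ G := G.deleteIncidenceSet_le v
    have hlt : G.deleteIncidenceSet v < G := by
      refine lt_of_le_of_ne hle fun h => ?_
      rw [← h, SimpleGraph.deleteIncidenceSet_adj] at hlv
      exact hlv.2.2 rfl
    have h := ih _ hlt (hG.anti hle)
    rw [adjMult_eq G hlv hl] at h
    rw [matchNum_eq G hlv hl]
    omega

/-- For a finite tree `T` on `n` vertices, the multiplicity of the eigenvalue `0` of
the adjacency matrix equals `n - 2 m(T)`, where `m(T)` is the matching number. -/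
theorem stmt9 {V : Type} [Finite V] (T : SimpleGraph V) (hT : T.IsTree) :
    (adjMult T 0 : ℤ) = (Nat.card V : ℤ) - 2 * (matchNum T : ℤ) := by
  have h := forest_nullity T hT.2
  omega
end

section
/- Let α be a real number. Define the toll n_α(T) = N_α(T) − N_α(T − 0) for a recursive tree T rooted at 0, and let E[n_α(Rec_k)] denote the average of n_α(T_p) over all parent functions p on {0,…,k−1}. Then the series Σ_{k=1}^∞ E[n_α(Rec_k)]/(k(k+1)) converges absolutely, and lim_{n→∞} E[N_α(Rec_n)]/n = Σ_{k=1}^∞ E[n_α(Rec_k)]/(k(k+1)). -/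
/-- The space of parent functions encoding recursive trees on `{0, …, n-1}`. -/
abbrev ParentSpace (n : ℕ) := ∀ j : Fin (n - 1), Fin (j.val + 1)

/-- The recursive tree `T_p` on `Fin n` encoded by the parent function `p`: the edges
are `{j+1, p j}` for `j+1 ∈ {1, …, n-1}`, and the tree is rooted at `0`. -/
def recTree {n : ℕ} (p : ParentSpace n) : SimpleGraph (Fin n) :=
  SimpleGraph.fromRel (fun a b => ∃ j : Fin (n - 1), a.val = j.val + 1 ∧ b.val = (p j).val)

/-- `E[N_α(Rec_n)]`: the average of `N_α(T_p)` over all parent functions `p`. -/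
noncomputable def meanAdjMult (α : ℝ) (n : ℕ) : ℝ :=
  (∑ p : ParentSpace n, (adjMult (recTree p) α : ℝ)) / Fintype.card (ParentSpace n)

/-- `E[n_α(Rec_{k+1})]`: the average over all parent functions `p` on `{0, …, k}` of the
toll `n_α(T_p) = N_α(T_p) - N_α(T_p - 0)`, where `0` is the root. -/
noncomputable def tollExp (α : ℝ) (k : ℕ) : ℝ :=
  (∑ p : ParentSpace (k + 1),
      ((adjMult (recTree p) α : ℝ) -
        (adjMult ((recTree p).induce ({(0 : Fin (k + 1))}ᶜ : Set (Fin (k + 1)))) α : ℝ)))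
    / Fintype.card (ParentSpace (k + 1))

/-! ### Eigenvalue multiplicities of graphs -/

section Spectral
open Classical

/-- The `α`-eigenspace of the adjacency operator of `G`, written out coordinatewise. -/
noncomputable def adjEigenspace {V : Type} [Fintype V] (G : SimpleGraph V) (α : ℝ) :
    Submodule ℝ (V → ℝ) where
  carrier := {x | ∀ v, ∑ w, (if G.Adj v w then x w else 0) = α * x v}
  add_mem' := by
    intro x y hx hy v
    have : ∀ w, (if G.Adj v w then (x + y) w else 0)
        = (if G.Adj v w then x w else 0) + (if G.Adj v w then y w else 0) := by
      intro w; split_ifs <;> simp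
    simp only [this, Finset.sum_add_distrib]
    rw [hx v, hy v, Pi.add_apply]; ring
  zero_mem' := by intro v; simp
  smul_mem' := by
    intro c x hx v
    have : ∀ w, (if G.Adj v w then (c • x) w else 0) = c * (if G.Adj v w then x w else 0) := by
      intro w; split_ifs <;> simp
    simp only [this, ← Finset.mul_sum]
    rw [hx v, Pi.smul_apply, smul_eq_mul]; ring

theorem mem_adjEigenspace {V : Type} [Fintype V] {G : SimpleGraph V} {α : ℝ} {x : V → ℝ} :
    x ∈ adjEigenspace G α ↔ ∀ v, ∑ w, (if G.Adj v w then x w else 0) = α * x v := Iff.rfl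

theorem adjMult_eq_s12 {V : Type} [h : Fintype V] (G : SimpleGraph V) (α : ℝ) :
    adjMult G α = Module.finrank ℝ (adjEigenspace G α) := by
  unfold adjMult eigMult
  rw [Subsingleton.elim (Fintype.ofFinite V) h]
  have : LinearMap.ker (G.adjMatrix ℝ - α • (1 : Matrix V V ℝ)).mulVecLin
      = adjEigenspace G α := by
    ext x
    rw [LinearMap.mem_ker, mem_adjEigenspace, funext_iff]
    refine forall_congr' fun v => ?_
    simp only [Matrix.mulVecLin_apply, Matrix.sub_mulVec, Matrix.smul_mulVec, Matrix.one_mulVec,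
      Pi.sub_apply, Pi.smul_apply, smul_eq_mul, Pi.zero_apply, sub_eq_zero]
    simp [Matrix.mulVec, dotProduct, SimpleGraph.adjMatrix_apply]
  rw [← this]

/-- Isomorphic graphs have the same eigenvalue multiplicities. -/
theorem adjMult_iso {V W : Type} [Fintype V] [Fintype W] {G : SimpleGraph V} {H : SimpleGraph W}
    (f : G ≃g H) (α : ℝ) : adjMult G α = adjMult H α := by
  have key : ∀ {V W : Type} [Fintype V] [Fintype W] {G : SimpleGraph V} {H : SimpleGraph W},
      (G ≃g H) → adjMult H α ≤ adjMult G α := by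
    intro V W _ _ G H f
    rw [adjMult_eq_s12, adjMult_eq_s12]
    refine LinearMap.finrank_le_finrank_of_injective
      (f := (LinearMap.funLeft ℝ ℝ f).restrict
        (p := adjEigenspace H α) (q := adjEigenspace G α) ?_) ?_
    · intro x hx v
      have h := hx (f v)
      rw [← f.toEquiv.sum_comp] at h
      simpa [LinearMap.funLeft_apply, f.map_adj_iff] using h
    · intro x y h
      exact Subtype.ext (LinearMap.funLeft_injective_of_surjective ℝ ℝ f f.surjective
        (congrArg Subtype.val h))
  exact le_antisymm (key f.symm) (key f)

/-- Eigenvalue multiplicities add over disjoint unions. -/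
theorem adjMult_sum {V W : Type} [Fintype V] [Fintype W] (G : SimpleGraph V) (H : SimpleGraph W)
    (α : ℝ) : adjMult (G ⊕g H) α = adjMult G α + adjMult H α := by
  rw [adjMult_eq_s12, adjMult_eq_s12, adjMult_eq_s12, ← Module.finrank_prod]
  refine LinearEquiv.finrank_eq
    { toFun := fun x => (⟨fun v => x.1 (Sum.inl v), fun v => ?_⟩,
        ⟨fun w => x.1 (Sum.inr w), fun w => ?_⟩)
      map_add' := fun x y => rfl
      map_smul' := fun c x => rfl
      invFun := fun y => ⟨Sum.elim y.1.1 y.2.1, ?_⟩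
      left_inv := fun x => ?_
      right_inv := fun y => rfl }
  · simpa [Fintype.sum_sum_type] using x.2 (Sum.inl v)
  · simpa [Fintype.sum_sum_type] using x.2 (Sum.inr w)
  · rintro (v | w)
    · simpa [Fintype.sum_sum_type] using y.1.2 v
    · simpa [Fintype.sum_sum_type] using y.2.2 w
  · ext (v | w) <;> rfl

/-- A subspace cut out by one linear functional has codimension at most one. -/
theorem finrank_le_inf_ker {E : Type} [AddCommGroup E] [Module ℝ E] [FiniteDimensional ℝ E]
    (S : Submodule ℝ E) (l : E →ₗ[ℝ] ℝ) :
    Module.finrank ℝ S ≤ Module.finrank ℝ (S ⊓ LinearMap.ker l : Submodule ℝ E) + 1 := by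
  have h := LinearMap.finrank_range_add_finrank_ker (l.domRestrict S)
  have h1 : Module.finrank ℝ (LinearMap.range (l.domRestrict S)) ≤ 1 := by
    simpa using Submodule.finrank_le (LinearMap.range (l.domRestrict S))
  have h2 : Module.finrank ℝ (LinearMap.ker (l.domRestrict S))
      = Module.finrank ℝ (S ⊓ LinearMap.ker l : Submodule ℝ E) := by
    rw [LinearMap.ker_domRestrict]
    rw [← Submodule.finrank_map_subtype_eq, Submodule.map_comap_subtype]
  omega

theorem sum_compl_singleton {V : Type} [Fintype V] (r : V) (g : V → ℝ) :
    ∑ w, g w = g r + ∑ w : ({r}ᶜ : Set V), g w := by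
  rw [← Finset.add_sum_erase _ g (Finset.mem_univ r)]
  congr 1
  refine Finset.sum_subtype _ (fun x => ?_) g
  simp

/-- Deleting a vertex lowers an eigenvalue multiplicity by at most one: an eigenvector
vanishing at `r` restricts to an eigenvector of `G - r`. -/
theorem adjMult_le_delete {V : Type} [Fintype V] (G : SimpleGraph V) (r : V) (α : ℝ) :
    adjMult G α ≤ adjMult (G.induce ({r}ᶜ : Set V)) α + 1 := by
  rw [adjMult_eq_s12, adjMult_eq_s12]
  refine (finrank_le_inf_ker _ (LinearMap.proj r)).trans (Nat.add_le_add_right ?_ 1)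
  refine LinearMap.finrank_le_finrank_of_injective
    (f := ((LinearMap.funLeft ℝ ℝ (Subtype.val : ({r}ᶜ : Set V) → V)).restrict
      (p := adjEigenspace G α ⊓ LinearMap.ker (LinearMap.proj r))
      (q := adjEigenspace (G.induce ({r}ᶜ : Set V)) α) ?_)) ?_
  · rintro x ⟨hx, hr⟩ v
    have hr' : x r = 0 := hr
    have := hx v
    rw [sum_compl_singleton r] at this
    simpa [hr', LinearMap.funLeft_apply] using this
  · rw [← LinearMap.ker_eq_bot, LinearMap.ker_eq_bot']
    rintro ⟨x, hx, hr⟩ h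
    ext v
    by_cases hv : v = r
    · subst hv; exact hr
    · exact congrFun (congrArg Subtype.val h) ⟨v, hv⟩

/-- Deleting a vertex raises an eigenvalue multiplicity by at most one: an eigenvector of `G - r`
extended by zero is an eigenvector of `G` as soon as the equation at `r` holds. -/
theorem adjMult_delete_le {V : Type} [Fintype V] (G : SimpleGraph V) (r : V) (α : ℝ) :
    adjMult (G.induce ({r}ᶜ : Set V)) α ≤ adjMult G α + 1 := by
  rw [adjMult_eq_s12, adjMult_eq_s12]
  let l : (({r}ᶜ : Set V) → ℝ) →ₗ[ℝ] ℝ :=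
    ∑ w : ({r}ᶜ : Set V), (if G.Adj r w then (LinearMap.proj w) else 0)
  have hl : ∀ x, l x = ∑ w : ({r}ᶜ : Set V), (if G.Adj r w then x w else 0) := by
    intro x
    simp only [l, LinearMap.sum_apply]
    refine Finset.sum_congr rfl fun w _ => ?_
    split_ifs <;> simp
  refine (finrank_le_inf_ker _ l).trans (Nat.add_le_add_right ?_ 1)
  refine LinearMap.finrank_le_finrank_of_injective
    (f := ((Function.ExtendByZero.linearMap ℝ (Subtype.val : ({r}ᶜ : Set V) → V)).restrict
      (p := adjEigenspace (G.induce ({r}ᶜ : Set V)) α ⊓ LinearMap.ker l)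
      (q := adjEigenspace G α) ?_)) ?_
  · rintro x ⟨hx, hr⟩ v
    have h1 : Function.extend (Subtype.val : ({r}ᶜ : Set V) → V) x 0 r = 0 := by
      rw [Function.extend_apply']
      · rfl
      · rintro ⟨a, ha⟩; exact a.2 ha
    have h2 : ∀ w : ({r}ᶜ : Set V), Function.extend Subtype.val x 0 (w : V) = x w :=
      fun w => Subtype.val_injective.extend_apply _ _ _
    have hr' : l x = 0 := hr
    rw [hl] at hr'
    simp only [Function.ExtendByZero.linearMap_apply]
    rw [sum_compl_singleton r]
    simp only [h1, h2, ite_self, zero_add]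
    by_cases hv : v = r
    · subst hv; rw [h1, mul_zero]; exact hr'
    · have := hx ⟨v, hv⟩
      rw [h2 ⟨v, hv⟩]
      simpa using this
  · intro x y h
    have h' := congrArg Subtype.val h
    ext w
    have h3 := congrFun h' (w : V)
    simp only [LinearMap.coe_restrict_apply, Function.ExtendByZero.linearMap_apply] at h3
    rwa [Subtype.val_injective.extend_apply, Subtype.val_injective.extend_apply] at h3

end Spectral

/-! ### Rooted trees as binary trees -/

/-- Binary trees. `leaf` encodes the one-vertex rooted tree and `join a b` the rooted tree obtained
by hanging the root of `b` below the root of `a`; the leaves of the binary tree are the vertices of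
the rooted tree. -/
inductive BTree : Type
  | leaf : BTree
  | join : BTree → BTree → BTree

namespace BTree

/-- The vertices of the encoded rooted tree. -/
@[reducible] def Vert : BTree → Type
  | leaf => Unit
  | join a b => Vert a ⊕ Vert b

/-- The finite type structure on the vertices. -/
noncomputable instance instFintypeVert : (t : BTree) → Fintype (Vert t)
  | leaf => inferInstanceAs (Fintype Unit)
  | join a b =>
    letI := instFintypeVert a
    letI := instFintypeVert b
    inferInstanceAs (Fintype (Vert a ⊕ Vert b))

theorem sum_vert_join (a b : BTree) (g : Vert (join a b) → ℝ) :
    ∑ v, g v = ∑ v : Vert a, g (Sum.inl v) + ∑ v : Vert b, g (Sum.inr v) :=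
  Fintype.sum_sum_type g

theorem sum_vert_leaf (g : Vert leaf → ℝ) : ∑ v, g v = g () :=
  Fintype.sum_unique g

/-- The root of the encoded rooted tree. -/
def root : (t : BTree) → Vert t
  | leaf => ()
  | join a _ => Sum.inl (root a)

/-- The encoded tree as a graph. -/
def graph : (t : BTree) → SimpleGraph (Vert t)
  | leaf => ⊥
  | join a b => (graph a ⊕g graph b) ⊔ SimpleGraph.edge (Sum.inl (root a)) (Sum.inr (root b))

/-- Attach a new childless vertex below the vertex `v`: the leaf `v` of the binary tree is
replaced by a cherry. -/
def grow : (t : BTree) → Vert t → BTree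
  | leaf, _ => join leaf leaf
  | join a b, Sum.inl v => join (grow a v) b
  | join a b, Sum.inr v => join a (grow b v)

/-- The vertices of `grow t v` are the old ones (`some`) and the new one (`none`). -/
def growVert : (t : BTree) → (v : Vert t) → Option (Vert t) ≃ Vert (grow t v)
  | leaf, _ =>
    { toFun := fun o => o.elim (Sum.inr ()) (fun _ => Sum.inl ())
      invFun := Sum.elim (fun _ => some ()) (fun _ => none)
      left_inv := by rintro (_ | _) <;> rfl
      right_inv := by rintro (_ | _) <;> rfl }
  | join a b, Sum.inl v =>
    { toFun := fun o => match o with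
        | none => Sum.inl (growVert a v none)
        | some (Sum.inl x) => Sum.inl (growVert a v (some x))
        | some (Sum.inr y) => Sum.inr y
      invFun := Sum.elim (fun z => ((growVert a v).symm z).map Sum.inl) (fun y => some (Sum.inr y))
      left_inv := by rintro (_ | _ | _) <;> simp
      right_inv := by
        rintro (z | y)
        · obtain ⟨o, rfl⟩ := (growVert a v).surjective z
          cases o <;> simp <;> rfl
        · rfl }
  | join a b, Sum.inr v =>
    { toFun := fun o => match o with
        | none => Sum.inr (growVert b v none)
        | some (Sum.inl x) => Sum.inl x
        | some (Sum.inr y) => Sum.inr (growVert b v (some y))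
      invFun := Sum.elim (fun y => some (Sum.inl y)) (fun z => ((growVert b v).symm z).map Sum.inr)
      left_inv := by rintro (_ | _ | _) <;> simp
      right_inv := by
        rintro (y | z)
        · rfl
        · obtain ⟨o, rfl⟩ := (growVert b v).surjective z
          cases o <;> simp <;> rfl }

theorem growVert_root : (t : BTree) → (v : Vert t) →
    growVert t v (some (root t)) = root (grow t v)
  | leaf, _ => rfl
  | join a _, Sum.inl v => congrArg Sum.inl (growVert_root a v)
  | join _ _, Sum.inr _ => rfl

theorem graph_join_inl_inl (a b : BTree) (x y : Vert a) :
    (graph (join a b)).Adj (Sum.inl x) (Sum.inl y) ↔ (graph a).Adj x y := by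
  simp [graph, SimpleGraph.edge_adj]

theorem graph_join_inr_inr (a b : BTree) (x y : Vert b) :
    (graph (join a b)).Adj (Sum.inr x) (Sum.inr y) ↔ (graph b).Adj x y := by
  simp [graph, SimpleGraph.edge_adj]

theorem graph_join_inl_inr (a b : BTree) (x : Vert a) (y : Vert b) :
    (graph (join a b)).Adj (Sum.inl x) (Sum.inr y) ↔ x = root a ∧ y = root b := by
  simp [graph, SimpleGraph.edge_adj]

theorem graph_grow_some_some : (t : BTree) → (v x y : Vert t) →
    ((graph (grow t v)).Adj (growVert t v (some x)) (growVert t v (some y)) ↔ (graph t).Adj x y)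
  | leaf, _, _, _ => by
    change (graph (join leaf leaf)).Adj (Sum.inl ()) (Sum.inl ()) ↔ _
    rw [graph_join_inl_inl]
  | join a b, Sum.inl v, Sum.inl x, Sum.inl y =>
    (graph_join_inl_inl _ _ _ _).trans ((graph_grow_some_some a v x y).trans
      (graph_join_inl_inl _ _ _ _).symm)
  | join a b, Sum.inl v, Sum.inr x, Sum.inr y =>
    (graph_join_inr_inr _ _ _ _).trans (graph_join_inr_inr _ _ _ _).symm
  | join a b, Sum.inl v, Sum.inl x, Sum.inr y => by
    refine (graph_join_inl_inr _ _ _ _).trans ?_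
    rw [← growVert_root, graph_join_inl_inr]; simp
  | join a b, Sum.inl v, Sum.inr x, Sum.inl y => by
    rw [SimpleGraph.adj_comm, SimpleGraph.adj_comm (graph (join a b))]
    refine (graph_join_inl_inr _ _ _ _).trans ?_
    rw [← growVert_root, graph_join_inl_inr]; simp
  | join a b, Sum.inr v, Sum.inl x, Sum.inl y =>
    (graph_join_inl_inl _ _ _ _).trans (graph_join_inl_inl _ _ _ _).symm
  | join a b, Sum.inr v, Sum.inr x, Sum.inr y =>
    (graph_join_inr_inr _ _ _ _).trans ((graph_grow_some_some b v x y).trans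
      (graph_join_inr_inr _ _ _ _).symm)
  | join a b, Sum.inr v, Sum.inl x, Sum.inr y => by
    refine (graph_join_inl_inr _ _ _ _).trans ?_
    rw [← growVert_root, graph_join_inl_inr]; simp
  | join a b, Sum.inr v, Sum.inr x, Sum.inl y => by
    rw [SimpleGraph.adj_comm, SimpleGraph.adj_comm (graph (join a b))]
    refine (graph_join_inl_inr _ _ _ _).trans ?_
    rw [← growVert_root, graph_join_inl_inr]; simp

theorem graph_grow_some_none : (t : BTree) → (v x : Vert t) →
    ((graph (grow t v)).Adj (growVert t v (some x)) (growVert t v none) ↔ x = v)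
  | leaf, _, _ => by
    change (graph (join leaf leaf)).Adj (Sum.inl ()) (Sum.inr ()) ↔ _
    rw [graph_join_inl_inr]; simp [root]
  | join a b, Sum.inl v, Sum.inl x =>
    (graph_join_inl_inl _ _ _ _).trans ((graph_grow_some_none a v x).trans Sum.inl_injective.eq_iff.symm)
  | join a b, Sum.inl v, Sum.inr x => by
    rw [SimpleGraph.adj_comm]
    refine (graph_join_inl_inr _ _ _ _).trans ?_
    rw [← growVert_root]; simp
  | join a b, Sum.inr v, Sum.inr x =>
    (graph_join_inr_inr _ _ _ _).trans ((graph_grow_some_none b v x).trans Sum.inr_injective.eq_iff.symm)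
  | join a b, Sum.inr v, Sum.inl x => by
    refine (graph_join_inl_inr _ _ _ _).trans ?_
    rw [← growVert_root]; simp

/-! ### The growth generator and sums over branches -/

/-- The number of vertices, as a real number. -/
noncomputable def size (t : BTree) : ℝ := Fintype.card (Vert t)

theorem size_leaf : size leaf = 1 := by simp [size]

theorem size_join (a b : BTree) : size (join a b) = size a + size b := by
  simp [size]

/-- The generator of the growth process, without the normalisation by the size: the total change
of `φ` over all ways of growing `t` by one vertex. -/
noncomputable def gen (φ : BTree → ℝ) (t : BTree) : ℝ := ∑ v : Vert t, φ (grow t v) - size t * φ t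

/-- The sum of `e` over the subtrees hanging off the root. -/
noncomputable def branchSum (e : BTree → ℝ) : BTree → ℝ
  | leaf => 0
  | join a b => branchSum e a + e b

/-- Commutation of the generator with `branchSum`: growing inside a branch contributes
`gen e` of that branch, and growing at the root contributes a new one-vertex branch. -/
theorem gen_branchSum (e : BTree → ℝ) :
    ∀ t, gen (branchSum e) t = branchSum (gen e) t + e leaf
  | leaf => by
    rw [gen, sum_vert_leaf]
    simp only [grow, branchSum]; ring
  | join a b => by
    have ih := gen_branchSum e a
    rw [gen] at ih
    rw [gen, sum_vert_join]
    simp only [grow, branchSum, size_join, Finset.sum_add_distrib,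
      Finset.sum_const, Finset.card_univ, nsmul_eq_mul]
    change _ + size a * e b + (size b * branchSum e a + _) - _ = _
    rw [gen]
    linear_combination ih

end BTree

namespace BTree

/-- Deleting the root leaves the disjoint union of the branches. -/
def deleteRootIso (a b : BTree) :
    (graph (join a b)).induce ({root (join a b)}ᶜ : Set (Vert (join a b))) ≃g
      ((graph a).induce ({root a}ᶜ : Set (Vert a)) ⊕g graph b) where
  toFun := fun z => match z with
    | ⟨Sum.inl x, hx⟩ => Sum.inl ⟨x, fun h => hx (congrArg Sum.inl h)⟩
    | ⟨Sum.inr y, _⟩ => Sum.inr y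
  invFun := fun z => match z with
    | Sum.inl x => ⟨Sum.inl x.1, fun h => x.2 (Sum.inl_injective h)⟩
    | Sum.inr y => ⟨Sum.inr y, fun h => Sum.inr_ne_inl h⟩
  left_inv := by rintro ⟨_ | _, _⟩ <;> rfl
  right_inv := by rintro (_ | _) <;> rfl
  map_rel_iff' := by
    rintro ⟨x | x, hx⟩ ⟨y | y, hy⟩
    · exact (graph_join_inl_inl a b x y).symm
    · refine iff_of_false (by simp) ?_
      intro h
      exact hx (congrArg Sum.inl ((graph_join_inl_inr a b x y).1 h).1)
    · refine iff_of_false (by simp) ?_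
      intro h
      exact hy (congrArg Sum.inl ((graph_join_inl_inr a b y x).1 h.symm).1)
    · exact (graph_join_inr_inr a b x y).symm

/-! ### Multiplicities after deleting the root -/

/-- The multiplicity `N_α` as a function of the encoding. -/
noncomputable def mult (α : ℝ) (t : BTree) : ℝ := adjMult (graph t) α

/-- Since `N_α` is additive over components, `N_α(T - 0)` is the branch sum of `N_α`. -/
theorem adjMult_delete_root (α : ℝ) : ∀ t : BTree,
    (adjMult ((graph t).induce ({root t}ᶜ : Set (Vert t))) α : ℝ) = branchSum (mult α) t
  | leaf => by
    have : IsEmpty ({root leaf}ᶜ : Set (Vert leaf)) := ⟨fun x => x.2 rfl⟩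
    rw [adjMult_eq_s12, branchSum]
    simp [Module.finrank_zero_of_subsingleton]
  | join a b => by
    classical
    rw [adjMult_iso (deleteRootIso a b), adjMult_sum, branchSum, Nat.cast_add,
      adjMult_delete_root α a, mult]

/-! ### Encoding of recursive trees -/

/-- Extend a labelling of the vertices of `t` by giving the next label to the new vertex of the
tree grown at the vertex labelled `c`. -/
def growLabel {m : ℕ} (t : BTree) (s : Fin (m + 1) ≃ Vert t) (c : Fin (m + 1)) :
    Fin (m + 2) ≃ Vert (grow t (s c)) :=
  finSuccEquivLast.trans ((Equiv.optionCongr s).trans (growVert t (s c)))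

theorem growLabel_castSucc {m : ℕ} (t : BTree) (s : Fin (m + 1) ≃ Vert t) (c a : Fin (m + 1)) :
    growLabel t s c a.castSucc = growVert t (s c) (some (s a)) := by
  simp [growLabel]

theorem growLabel_last {m : ℕ} (t : BTree) (s : Fin (m + 1) ≃ Vert t) (c : Fin (m + 1)) :
    growLabel t s c (Fin.last (m + 1)) = growVert t (s c) none := by
  simp [growLabel]

theorem growLabel_adj_last {m : ℕ} (t : BTree) (s : Fin (m + 1) ≃ Vert t) (c a : Fin (m + 1)) :
    (graph (grow t (s c))).Adj (growLabel t s c a.castSucc) (growLabel t s c (Fin.last (m + 1))) ↔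
      a = c := by
  rw [growLabel_castSucc, growLabel_last, graph_grow_some_none]
  exact Equiv.apply_eq_iff_eq _

theorem growLabel_adj_castSucc {m : ℕ} (t : BTree) (s : Fin (m + 1) ≃ Vert t)
    (c a b : Fin (m + 1)) :
    (graph (grow t (s c))).Adj (growLabel t s c a.castSucc) (growLabel t s c b.castSucc) ↔
      (graph t).Adj (s a) (s b) := by
  rw [growLabel_castSucc, growLabel_castSucc, graph_grow_some_some]

/-- The binary encoding of the recursive tree of a parent function, together with the
correspondence between labels and vertices: vertices are attached in order of their labels. -/
def encode : (m : ℕ) → ParentSpace (m + 1) → (t : BTree) × (Fin (m + 1) ≃ Vert t)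
  | 0, _ => ⟨leaf, Equiv.ofUnique (Fin 1) Unit⟩
  | m + 1, p =>
    let r := encode m (fun j : Fin m => p j.castSucc)
    ⟨grow r.1 (r.2 (p (Fin.last m))), growLabel r.1 r.2 (p (Fin.last m))⟩

theorem encode_zero : (m : ℕ) → (p : ParentSpace (m + 1)) → (encode m p).2 0 = root (encode m p).1
  | 0, _ => rfl
  | m + 1, p => by
    refine (growLabel_castSucc _ _ _ 0).trans ?_
    rw [encode_zero m]
    exact growVert_root _ _

theorem recTree_adj {n : ℕ} (p : ParentSpace n) (a b : Fin n) :
    (recTree p).Adj a b ↔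
      (∃ j : Fin (n - 1), a.val = j.val + 1 ∧ b.val = (p j).val) ∨
      (∃ j : Fin (n - 1), b.val = j.val + 1 ∧ a.val = (p j).val) := by
  rw [recTree, SimpleGraph.fromRel_adj]
  refine ⟨fun h => h.2, fun h => ⟨?_, h⟩⟩
  rintro rfl
  rcases h with ⟨j, h1, h2⟩ | ⟨j, h1, h2⟩ <;> have := (p j).2 <;> omega

theorem recTree_castSucc (m : ℕ) (p : ParentSpace (m + 2)) (a b : Fin (m + 1)) :
    (recTree p).Adj a.castSucc b.castSucc ↔
      (recTree (n := m + 1) (fun j : Fin m => p j.castSucc)).Adj a b := by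
  have key : ∀ a b : Fin (m + 1),
      (∃ j : Fin (m + 1), a.castSucc.val = j.val + 1 ∧ b.castSucc.val = (p j).val) ↔
      (∃ j : Fin m, a.val = j.val + 1 ∧ b.val = (p j.castSucc).val) := by
    intro a b
    constructor
    · rintro ⟨j, h1, h2⟩
      have hj : j.val < m := by have := a.2; simp at h1; omega
      exact ⟨⟨j.val, hj⟩, h1, h2⟩
    · rintro ⟨j, h1, h2⟩
      exact ⟨j.castSucc, h1, h2⟩
  rw [recTree_adj, recTree_adj]
  exact or_congr (key a b) (key b a)

theorem recTree_castSucc_last (m : ℕ) (p : ParentSpace (m + 2)) (a : Fin (m + 1)) :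
    (recTree p).Adj a.castSucc (Fin.last (m + 1)) ↔ a = p (Fin.last m) := by
  rw [recTree_adj]
  constructor
  · rintro (⟨j, h1, h2⟩ | ⟨j, h1, h2⟩)
    · have h3 := (p j).2
      have h4 := j.2
      simp at h1 h2; omega
    · have hj : j = Fin.last m := by ext; simp at h1; simp; omega
      subst hj
      exact Fin.ext h2
  · rintro h
    refine Or.inr ⟨Fin.last m, rfl, ?_⟩
    rw [h]; rfl

theorem encode_adj : (m : ℕ) → (p : ParentSpace (m + 1)) → (a b : Fin (m + 1)) →
    ((graph (encode m p).1).Adj ((encode m p).2 a) ((encode m p).2 b) ↔ (recTree p).Adj a b)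
  | 0, p, a, b => by
    have hab : a = b := Subsingleton.elim (α := Fin 1) a b
    subst hab
    simp
  | m + 1, p, a, b => by
    have hlast : ∀ a : Fin (m + 1),
        ((graph (encode (m + 1) p).1).Adj ((encode (m + 1) p).2 a.castSucc)
          ((encode (m + 1) p).2 (Fin.last (m + 1))) ↔
            (recTree p).Adj a.castSucc (Fin.last (m + 1))) := by
      intro a
      rw [recTree_castSucc_last]
      exact growLabel_adj_last _ _ _ a
    induction a using Fin.lastCases with
    | last =>
      induction b using Fin.lastCases with
      | last => simp
      | cast b =>
        rw [SimpleGraph.adj_comm, SimpleGraph.adj_comm (recTree p), hlast]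
    | cast a =>
      induction b using Fin.lastCases with
      | last => exact hlast a
      | cast b =>
        rw [recTree_castSucc, ← encode_adj m]
        exact growLabel_adj_castSucc _ _ _ a b

/-- The recursive tree is isomorphic to the graph of its encoding. -/
def encodeIso (m : ℕ) (p : ParentSpace (m + 1)) : recTree p ≃g graph (encode m p).1 where
  toEquiv := (encode m p).2
  map_rel_iff' := encode_adj m p _ _

theorem adjMult_recTree (α : ℝ) (m : ℕ) (p : ParentSpace (m + 1)) :
    (adjMult (recTree p) α : ℝ) = mult α (encode m p).1 := by
  rw [mult, adjMult_iso (encodeIso m p)]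

theorem adjMult_recTree_delete (α : ℝ) (m : ℕ) (p : ParentSpace (m + 1)) :
    (adjMult ((recTree p).induce ({(0 : Fin (m + 1))}ᶜ : Set (Fin (m + 1)))) α : ℝ)
      = branchSum (mult α) (encode m p).1 := by
  classical
  rw [← adjMult_delete_root]
  let f : (recTree p).induce ({(0 : Fin (m + 1))}ᶜ : Set (Fin (m + 1))) ≃g
      (graph (encode m p).1).induce
        ({root (encode m p).1}ᶜ : Set (Vert (encode m p).1)) :=
    { toEquiv := (encode m p).2.subtypeEquiv (fun a => by
        rw [← encode_zero m p]; simp)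
      map_rel_iff' := by
        rintro ⟨a, _⟩ ⟨b, _⟩
        exact encode_adj m p a b }
  rw [adjMult_iso f]

/-! ### Expectations over the random recursive tree -/

/-- The expectation of `φ` over the random recursive tree with `m + 1` vertices. -/
noncomputable def mean (m : ℕ) (φ : BTree → ℝ) : ℝ :=
  (∑ p : ParentSpace (m + 1), φ (encode m p).1) / Fintype.card (ParentSpace (m + 1))

theorem card_parentSpace_pos (m : ℕ) : (0 : ℝ) < Fintype.card (ParentSpace (m + 1)) := by
  exact_mod_cast Fintype.card_pos

theorem mean_zero (φ : BTree → ℝ) : mean 0 φ = φ leaf := by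
  have h : ∀ p : ParentSpace (0 + 1), φ (encode 0 p).1 = φ leaf := fun _ => rfl
  have hc := card_parentSpace_pos 0
  simp only [mean, h, Finset.sum_const, Finset.card_univ, nsmul_eq_mul]
  field_simp

theorem size_encode (m : ℕ) (p : ParentSpace (m + 1)) : size (encode m p).1 = m + 1 := by
  rw [size, ← Fintype.card_congr (encode m p).2]; simp

/-- Splitting off the parent of the last vertex. -/
theorem sum_parentSpace_succ (m : ℕ) (g : ParentSpace (m + 2) → ℝ) :
    ∑ p, g p = ∑ q : ParentSpace (m + 1), ∑ c : Fin (m + 1),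
      g ((Fin.snocEquiv (fun j : Fin (m + 1) => Fin (j.val + 1))) (c, q)) := by
  refine ((Fin.snocEquiv (fun j : Fin (m + 1) => Fin (j.val + 1))).sum_comp g).symm.trans ?_
  rw [Fintype.sum_prod_type, Finset.sum_comm]
  rfl

theorem card_parentSpace_succ (m : ℕ) :
    (Fintype.card (ParentSpace (m + 2)) : ℝ) = (m + 1) * Fintype.card (ParentSpace (m + 1)) := by
  have := sum_parentSpace_succ m (fun _ => 1)
  simp only [Finset.sum_const, Finset.card_univ, nsmul_eq_mul, mul_one, Fintype.card_fin] at this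
  rw [this]; push_cast; ring

theorem encode_snoc (m : ℕ) (q : ParentSpace (m + 1)) (c : Fin (m + 1)) :
    (encode (m + 1) ((Fin.snocEquiv (fun j : Fin (m + 1) => Fin (j.val + 1))) (c, q))).1
      = grow (encode m q).1 ((encode m q).2 c) := by
  have h1 : (fun j : Fin m => (Fin.snocEquiv (fun j : Fin (m + 1) => Fin (j.val + 1))) (c, q)
      j.castSucc) = q := by
    funext j
    exact Fin.snoc_castSucc (α := fun j : Fin (m + 1) => Fin (j.val + 1)) c q j
  have h2 : (Fin.snocEquiv (fun j : Fin (m + 1) => Fin (j.val + 1))) (c, q) (Fin.last m) = c :=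
    Fin.snoc_last (α := fun j : Fin (m + 1) => Fin (j.val + 1)) c q
  simp only [encode]
  rw [h1, h2]

theorem mean_succ (m : ℕ) (φ : BTree → ℝ) :
    mean (m + 1) φ = mean m φ + mean m (gen φ) / (m + 1) := by
  have hc := card_parentSpace_pos m
  have hm : (0 : ℝ) < m + 1 := by positivity
  have hs : ∑ p : ParentSpace (m + 2), φ (encode (m + 1) p).1
      = ∑ q : ParentSpace (m + 1), (gen φ (encode m q).1 + (m + 1) * φ (encode m q).1) := by
    rw [sum_parentSpace_succ]
    refine Finset.sum_congr rfl fun q _ => ?_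
    simp only [encode_snoc]
    rw [(encode m q).2.sum_comp (fun v => φ (grow (encode m q).1 v)), gen, size_encode]
    ring
  rw [Finset.sum_add_distrib, ← Finset.mul_sum] at hs
  simp only [mean]
  rw [hs, card_parentSpace_succ]
  field_simp
  ring

/-- In expectation, the tree on `n + 1` vertices has `1 / k` root branches with `k` vertices for
each `k ≤ n`, each branch being distributed as the random recursive tree of its size. -/
theorem mean_branchSum (n : ℕ) : ∀ e : BTree → ℝ,
    mean n (branchSum e) = ∑ k ∈ Finset.range n, mean k e / (k + 1) := by
  induction n with
  | zero => intro e; simp [mean_zero, branchSum]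
  | succ n ih =>
    intro e
    have h1 : mean n (gen (branchSum e)) = mean n (branchSum (gen e)) + e leaf := by
      have hc := card_parentSpace_pos n
      simp only [mean, gen_branchSum, Finset.sum_add_distrib, Finset.sum_const, Finset.card_univ,
        nsmul_eq_mul]
      field_simp
    have h2 : mean n (branchSum (gen e)) = mean n e - mean 0 e := by
      rw [ih, ← Finset.sum_range_sub (fun k => mean k e)]
      refine Finset.sum_congr rfl fun k _ => ?_
      rw [mean_succ]; ring
    rw [mean_succ, h1, h2, mean_zero, Finset.sum_range_succ, ih e]
    ring

end BTree

/-! ### The toll series -/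

open BTree in
theorem meanAdjMult_succ (α : ℝ) (n : ℕ) : meanAdjMult α (n + 1) = mean n (mult α) := by
  simp only [meanAdjMult, mean, adjMult_recTree]

open BTree in
theorem tollExp_eq (α : ℝ) (n : ℕ) :
    tollExp α n = mean n (mult α) - mean n (branchSum (mult α)) := by
  simp only [tollExp, mean, adjMult_recTree, adjMult_recTree_delete, Finset.sum_sub_distrib,
    sub_div]

theorem abs_tollExp_le (α : ℝ) (n : ℕ) : |tollExp α n| ≤ 1 := by
  have hc := BTree.card_parentSpace_pos n
  rw [tollExp, abs_div, abs_of_pos hc, div_le_one hc]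
  refine (Finset.abs_sum_le_sum_abs _ _).trans ?_
  refine (Finset.sum_le_card_nsmul _ _ 1 fun p _ => ?_).trans (by simp)
  have h1 := adjMult_le_delete (recTree p) 0 α
  have h2 := adjMult_delete_le (recTree p) 0 α
  rw [abs_le]
  constructor
  · have : (adjMult ((recTree p).induce ({0}ᶜ : Set (Fin (n + 1)))) α : ℝ)
      ≤ adjMult (recTree p) α + 1 := by exact_mod_cast h2
    linarith
  · have : (adjMult (recTree p) α : ℝ)
      ≤ adjMult ((recTree p).induce ({0}ᶜ : Set (Fin (n + 1)))) α + 1 := by exact_mod_cast h1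
    linarith

/-- The finite-`n` form of the limit: `E[N_α(Rec_{n+1})] / (n+1)` is a partial sum of the series
plus the contribution of the whole tree. -/
theorem meanAdjMult_div (α : ℝ) (n : ℕ) :
    meanAdjMult α (n + 1) / ((n + 1 : ℕ) : ℝ) =
      tollExp α n / (n + 1) +
        ∑ k ∈ Finset.range n, tollExp α k / (((k : ℝ) + 1) * ((k : ℝ) + 2)) := by
  have hF : ∀ n : ℕ, BTree.mean n (BTree.branchSum (BTree.mult α)) / (n + 1) =
      ∑ k ∈ Finset.range n, tollExp α k / (((k : ℝ) + 1) * ((k : ℝ) + 2)) := by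
    intro n
    induction n with
    | zero => simp [BTree.mean_branchSum]
    | succ n ih =>
      rw [Finset.sum_range_succ, ← ih, tollExp_eq, BTree.mean_branchSum (n + 1),
        Finset.sum_range_succ, ← BTree.mean_branchSum]
      push_cast
      field_simp
      ring
  rw [← hF, meanAdjMult_succ, tollExp_eq]
  push_cast
  ring

theorem summable_tollExp (α : ℝ) :
    Summable (fun k : ℕ => |tollExp α k| / (((k : ℝ) + 1) * ((k : ℝ) + 2))) := by
  have h : Summable (fun k : ℕ => 1 / ((k + 1 : ℕ) : ℝ) ^ 2) :=
    (summable_nat_add_iff 1).2 (Real.summable_one_div_nat_pow.2 one_lt_two)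
  refine Summable.of_nonneg_of_le (fun k => by positivity) (fun k => ?_) h
  refine div_le_div₀ zero_le_one (abs_tollExp_le α k) (by positivity) ?_
  push_cast
  nlinarith

/-- The series `∑_{k≥1} E[n_α(Rec_k)]/(k(k+1))` converges absolutely, and
`E[N_α(Rec_n)]/n` tends to its sum as `n → ∞`. (Here `tollExp α k = E[n_α(Rec_{k+1})]`,
so the `k`-th summand is `E[n_α(Rec_{k+1})]/((k+1)(k+2))`.) -/
theorem stmt12 (α : ℝ) :
    Summable (fun k : ℕ => |tollExp α k| / (((k : ℝ) + 1) * ((k : ℝ) + 2))) ∧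
    Filter.Tendsto (fun n : ℕ => meanAdjMult α n / (n : ℝ)) Filter.atTop
      (nhds (∑' k : ℕ, tollExp α k / (((k : ℝ) + 1) * ((k : ℝ) + 2)))) := by
  refine ⟨summable_tollExp α, ?_⟩
  rw [← Filter.tendsto_add_atTop_iff_nat 1]
  simp only [meanAdjMult_div]
  have hs : Summable (fun k : ℕ => tollExp α k / (((k : ℝ) + 1) * ((k : ℝ) + 2))) := by
    refine Summable.of_abs ((summable_tollExp α).congr fun k => ?_)
    rw [abs_div, abs_of_pos (a := ((k : ℝ) + 1) * ((k : ℝ) + 2)) (by positivity)]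
  have h0 : Filter.Tendsto (fun n : ℕ => tollExp α n / ((n : ℝ) + 1)) Filter.atTop (nhds 0) := by
    refine squeeze_zero_norm (fun n => ?_) tendsto_one_div_add_atTop_nhds_zero_nat
    have hn : (0 : ℝ) < (n : ℝ) + 1 := by positivity
    rw [Real.norm_eq_abs, abs_div, abs_of_pos hn]
    exact div_le_div_of_nonneg_right (abs_tollExp_le α n) hn.le
  simpa using h0.add hs.hasSum.tendsto_sum_nat
end

section
/- Fix m ≥ 1 and a rooted tree H on m vertices, given as a parent function on {0,…,m−1} with root 0. Let β be the proportion of parent functions q on {0,…,m−1} (out of the (m−1)! of them) such that T_q is isomorphic to H as a rooted tree. Then the expected number of vertices v of the random recursive tree Rec_n whose fringe subtree is isomorphic to H as a rooted tree equals (β/(m(m+1)))·n + O(1) as n → ∞. -/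
/-- The parent map of a recursive tree: the root `0` maps to itself, and vertex `j + 1`
maps to its parent `p j`. -/
def parentMap {n : ℕ} (p : ParentSpace n) : Fin n → Fin n := fun v =>
  if h : v.val = 0 then v
  else
    have h1 : v.val - 1 < n - 1 := by have := v.isLt; omega
    have h2 := (p ⟨v.val - 1, h1⟩).isLt
    ⟨(p ⟨v.val - 1, h1⟩).val, by have := v.isLt; omega⟩

/-- The set of descendants of `v` in the recursive tree encoded by `p`: the vertices
obtained from which `v` is reached by finitely many applications of the parent map. -/
def descSet {n : ℕ} (p : ParentSpace n) (v : Fin n) : Set (Fin n) :=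
  {u | ∃ t : ℕ, (parentMap p)^[t] u = v}

/-- Rooted isomorphism of rooted graphs: a graph isomorphism mapping root to root. -/
def RootedIso {A B : Type} (G : SimpleGraph A) (a : A) (G' : SimpleGraph B) (b : B) :
    Prop :=
  ∃ φ : G ≃g G', φ a = b

/-! ### Parent maps and labelled occurrences -/

/-- The recursive tree on `k + 2` vertices obtained from `p` by attaching the new vertex `k + 1`
to `x`. -/
def push {k : ℕ} (p : ParentSpace (k + 1)) (x : Fin (k + 1)) : ParentSpace (k + 2) :=
  Fin.snocEquiv (fun j : Fin (k + 1) => Fin (j.val + 1)) (x, p)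

lemma push_castSucc {k : ℕ} (p : ParentSpace (k + 1)) (x : Fin (k + 1)) (j : Fin k) :
    push p x (Fin.castSucc j : Fin (k + 1)) = p j := by
  simp [push, Fin.snocEquiv]

lemma push_last {k : ℕ} (p : ParentSpace (k + 1)) (x : Fin (k + 1)) :
    push p x (Fin.last k) = x := by
  simp [push, Fin.snocEquiv]

lemma parentMap_zero {k : ℕ} (p : ParentSpace (k + 1)) : parentMap p 0 = 0 := by
  simp [parentMap]

lemma parentMap_succ {k : ℕ} (p : ParentSpace (k + 1)) (j : Fin k) :
    (parentMap p j.succ).val = (p j).val := by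
  simp [parentMap]

lemma parentMap_lt {k : ℕ} (p : ParentSpace (k + 1)) (u : Fin (k + 1)) (hu : u ≠ 0) :
    parentMap p u < u := by
  obtain ⟨j, rfl⟩ := Fin.exists_succ_eq.2 hu
  rw [Fin.lt_def, parentMap_succ]
  have := (p j).isLt
  simp only [Fin.val_succ]
  exact this

lemma parentMap_le {k : ℕ} (p : ParentSpace (k + 1)) (u : Fin (k + 1)) :
    parentMap p u ≤ u := by
  by_cases hu : u = 0
  · subst hu; simp [parentMap_zero]
  · exact (parentMap_lt p u hu).le

lemma parentMap_push_castSucc {k : ℕ} (p : ParentSpace (k + 1)) (x u : Fin (k + 1)) :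
    parentMap (push p x) u.castSucc = (parentMap p u).castSucc := by
  induction u using Fin.cases with
  | zero => simp [parentMap_zero]
  | succ j =>
    apply Fin.ext
    rw [← Fin.succ_castSucc, parentMap_succ, push_castSucc]
    exact (parentMap_succ p j).symm

lemma parentMap_push_last {k : ℕ} (p : ParentSpace (k + 1)) (x : Fin (k + 1)) :
    parentMap (push p x) (Fin.last (k + 1)) = x.castSucc := by
  apply Fin.ext
  rw [← Fin.succ_last, parentMap_succ, push_last, Fin.val_castSucc]

lemma parentMap_injective {k : ℕ} {p q : ParentSpace (k + 1)}
    (h : ∀ u, u ≠ 0 → parentMap p u = parentMap q u) : p = q := by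
  funext j
  apply Fin.ext
  have := congrArg Fin.val (h (Fin.succ j) (Fin.succ_ne_zero _))
  rwa [parentMap_succ, parentMap_succ] at this

/-- `e` exhibits a fringe subtree of `T_p` whose increasing relabelling is the recursive
tree `T_q`. The last condition says that the image of `e` is closed under taking children; all
conditions are local, so they are easy to track when a vertex is attached to `T_p`. -/
def IsOcc {a k : ℕ} (p : ParentSpace (k + 1)) (q : ParentSpace (a + 1))
    (e : Fin (a + 1) → Fin (k + 1)) : Prop :=
  StrictMono e ∧ (∀ i, i ≠ 0 → parentMap p (e i) = e (parentMap q i)) ∧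
    ∀ u, u ≠ 0 → parentMap p u ∈ Set.range e → u ∈ Set.range e

open Classical in
/-- The occurrences of the labelled tree `q` as a fringe subtree of `T_p`. -/
noncomputable def occ {a k : ℕ} (p : ParentSpace (k + 1)) (q : ParentSpace (a + 1)) :
    Finset (Fin (a + 1) → Fin (k + 1)) :=
  Finset.univ.filter (IsOcc p q)

lemma mem_occ {a k : ℕ} {p : ParentSpace (k + 1)} {q : ParentSpace (a + 1)}
    {e : Fin (a + 1) → Fin (k + 1)} : e ∈ occ p q ↔ IsOcc p q e := by
  simp [occ]

/-- The total number of occurrences of `q` in all recursive trees on `k + 1` vertices. -/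
noncomputable def numOcc {a : ℕ} (k : ℕ) (q : ParentSpace (a + 1)) : ℕ :=
  ∑ p : ParentSpace (k + 1), (occ p q).card

/-! ### Attaching a vertex -/

/-- Occurrences in `push p x` avoiding the new vertex. -/
lemma isOcc_push_castSucc {a k : ℕ} (p : ParentSpace (k + 1)) (x : Fin (k + 1))
    (q : ParentSpace (a + 1)) (e : Fin (a + 1) → Fin (k + 1)) :
    IsOcc (push p x) q (fun i => (e i).castSucc) ↔ IsOcc p q e ∧ x ∉ Set.range e := by
  constructor
  · rintro ⟨h1, h2, h3⟩
    refine ⟨⟨fun i j hij => by simpa using h1 hij, fun i hi => ?_, fun u hu hmem => ?_⟩, ?_⟩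
    · have := h2 i hi
      rw [parentMap_push_castSucc] at this
      exact Fin.castSucc_injective _ this
    · obtain ⟨i, hi⟩ := hmem
      obtain ⟨j, hj⟩ := h3 u.castSucc (by simpa using hu)
        ⟨i, by simp [parentMap_push_castSucc, hi]⟩
      exact ⟨j, Fin.castSucc_injective _ hj⟩
    · rintro ⟨i, hi⟩
      obtain ⟨j, hj⟩ := h3 (Fin.last (k + 1)) (by simp)
        ⟨i, by simp [parentMap_push_last, hi]⟩
      exact Fin.castSucc_ne_last _ hj
  · rintro ⟨⟨h1, h2, h3⟩, hx⟩
    refine ⟨fun i j hij => by simpa using h1 hij, fun i hi => ?_, fun u hu hmem => ?_⟩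
    · simp [parentMap_push_castSucc, h2 i hi]
    · obtain ⟨i, hi⟩ := hmem
      induction u using Fin.lastCases with
      | last =>
        rw [parentMap_push_last] at hi
        exact absurd ⟨i, Fin.castSucc_injective _ hi⟩ hx
      | cast u =>
        rw [parentMap_push_castSucc] at hi
        obtain ⟨j, hj⟩ := h3 u (by simpa using hu) ⟨i, Fin.castSucc_injective _ hi⟩
        exact ⟨j, by simp [hj]⟩

/-- An occurrence in `push p x` either avoids the new vertex, or has it as its last vertex. -/
lemma isOcc_push_cases {a k : ℕ} {p : ParentSpace (k + 1)} {x : Fin (k + 1)}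
    {q : ParentSpace (a + 1)} {e : Fin (a + 1) → Fin (k + 2)} (he : IsOcc (push p x) q e) :
    (∃ e' : Fin (a + 1) → Fin (k + 1), e = fun i => (e' i).castSucc) ∨
      ∃ e' : Fin a → Fin (k + 1),
        e = Fin.snoc (α := fun _ => Fin (k + 2)) (fun i => (e' i).castSucc) (Fin.last (k + 1)) := by
  have hlt : ∀ i : Fin a, e i.castSucc ≠ Fin.last (k + 1) := fun i =>
    ((he.1 (Fin.castSucc_lt_last i)).trans_le (Fin.le_last _)).ne
  choose f hf using fun i => Fin.exists_castSucc_eq.2 (hlt i)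
  by_cases hl : e (Fin.last a) = Fin.last (k + 1)
  · right
    refine ⟨f, funext fun i => ?_⟩
    induction i using Fin.lastCases with
    | last => simp [hl]
    | cast i => simp [hf]
  · left
    obtain ⟨g, hg⟩ := Fin.exists_castSucc_eq.2 hl
    refine ⟨Fin.snoc (α := fun _ => Fin (k + 1)) f g, funext fun i => ?_⟩
    induction i using Fin.lastCases with
    | last => simp [hg]
    | cast i => simp [hf]

/-- Occurrences in `push p x` containing the new vertex, for patterns with at least two
vertices: the remaining vertices form an occurrence of the pattern without its last vertex. -/
lemma isOcc_push_snoc {a k : ℕ} (p : ParentSpace (k + 1)) (x : Fin (k + 1))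
    (q : ParentSpace (a + 1)) (y : Fin (a + 1)) (e : Fin (a + 1) → Fin (k + 1)) :
    IsOcc (push p x) (push q y)
      (Fin.snoc (α := fun _ => Fin (k + 2)) (fun i => (e i).castSucc) (Fin.last (k + 1))) ↔
      IsOcc p q e ∧ e y = x := by
  constructor
  · rintro ⟨h1, h2, h3⟩
    refine ⟨⟨fun i j hij => ?_, fun i hi => ?_, fun u hu hmem => ?_⟩, ?_⟩
    · simpa using h1 (Fin.castSucc_lt_castSucc_iff.2 hij)
    · have := h2 i.castSucc (by simpa using hi)
      simpa [parentMap_push_castSucc] using this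
    · obtain ⟨i, hi⟩ := hmem
      obtain ⟨j, hj⟩ := h3 u.castSucc (by simpa using hu)
        ⟨i.castSucc, by simp [parentMap_push_castSucc, hi]⟩
      induction j using Fin.lastCases with
      | last => simp [(Fin.castSucc_ne_last _).symm] at hj
      | cast j => exact ⟨j, by simpa using hj⟩
    · have := h2 (Fin.last (a + 1)) (by simp)
      simpa [parentMap_push_last, eq_comm] using this
  · rintro ⟨⟨h1, h2, h3⟩, hx⟩
    refine ⟨fun i j hij => ?_, fun i hi => ?_, fun u hu hmem => ?_⟩
    · induction j using Fin.lastCases with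
      | last =>
        obtain ⟨i, rfl⟩ := Fin.exists_castSucc_eq.2 hij.ne
        simp [Fin.castSucc_lt_last]
      | cast j =>
        obtain ⟨i, rfl⟩ := Fin.exists_castSucc_eq.2 (hij.trans (Fin.castSucc_lt_last j)).ne
        simpa using h1 (Fin.castSucc_lt_castSucc_iff.1 hij)
    · induction i using Fin.lastCases with
      | last => simp [parentMap_push_last, hx]
      | cast i => simp [parentMap_push_castSucc, h2 i (by simpa using hi)]
    · induction u using Fin.lastCases with
      | last => exact ⟨Fin.last _, by simp⟩
      | cast u =>
        rw [parentMap_push_castSucc] at hmem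
        obtain ⟨i, hi⟩ := hmem
        induction i using Fin.lastCases with
        | last => simp [(Fin.castSucc_ne_last _).symm] at hi
        | cast i =>
          obtain ⟨j, hj⟩ := h3 u (by simpa using hu) ⟨i, by simpa using hi⟩
          exact ⟨j.castSucc, by simp [hj]⟩

/-- The new vertex of `push p x` is a leaf. -/
lemma isOcc_push_leaf {k : ℕ} (p : ParentSpace (k + 1)) (x : Fin (k + 1))
    (q : ParentSpace 1) : IsOcc (a := 0) (push p x) q (fun _ => Fin.last (k + 1)) := by
  refine ⟨fun i j hij => absurd (Subsingleton.elim (α := Fin 1) i j) hij.ne,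
    fun i hi => absurd (Subsingleton.elim (α := Fin 1) i 0) hi, fun u hu hmem => ?_⟩
  obtain ⟨_, hi⟩ := hmem
  have := parentMap_lt (push p x) u hu
  rw [← hi] at this
  exact absurd (Fin.le_last u) (not_le.2 this)

open Classical in
/-- The occurrences in `push p x`: those avoiding the new vertex, and those containing it. -/
lemma card_occ_push {a k : ℕ} (p : ParentSpace (k + 1)) (x : Fin (k + 1))
    (q : ParentSpace (a + 1)) :
    (occ (push p x) q).card =
      ((occ p q).filter (fun e => x ∉ Set.range e)).card +
      (Finset.univ.filter (fun e' : Fin a → Fin (k + 1) => IsOcc (push p x) q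
        (Fin.snoc (α := fun _ => Fin (k + 2)) (fun i => (e' i).castSucc)
          (Fin.last (k + 1))))).card := by
  set A : (Fin (a + 1) → Fin (k + 1)) → (Fin (a + 1) → Fin (k + 2)) :=
    fun e i => (e i).castSucc with hA
  set B : (Fin a → Fin (k + 1)) → (Fin (a + 1) → Fin (k + 2)) :=
    fun e' => Fin.snoc (α := fun _ => Fin (k + 2)) (fun i => (e' i).castSucc)
      (Fin.last (k + 1)) with hB
  have hAi : Function.Injective A := fun e f h => funext fun i =>
    Fin.castSucc_injective _ (congrFun h i)
  have hBi : Function.Injective B := fun e f h => funext fun i => by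
    simpa [hB] using congrFun h i.castSucc
  rw [← Finset.card_image_of_injective _ hAi, ← Finset.card_image_of_injective _ hBi,
    ← Finset.card_union_of_disjoint]
  · congr 1
    ext e
    simp only [mem_occ, Finset.mem_union, Finset.mem_image, Finset.mem_filter, Finset.mem_univ,
      true_and]
    constructor
    · intro he
      rcases isOcc_push_cases he with ⟨e', rfl⟩ | ⟨e', rfl⟩
      · exact Or.inl ⟨e', (isOcc_push_castSucc p x q e').1 he, rfl⟩
      · exact Or.inr ⟨e', he, rfl⟩
    · rintro (⟨e', he, rfl⟩ | ⟨e', he, rfl⟩)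
      · exact (isOcc_push_castSucc p x q e').2 he
      · exact he
  · rw [Finset.disjoint_left]
    rintro _ h1 h2
    obtain ⟨e, -, rfl⟩ := Finset.mem_image.1 h1
    obtain ⟨f, -, h⟩ := Finset.mem_image.1 h2
    have := congrFun h (Fin.last a)
    simp [hA, hB, (Fin.castSucc_ne_last _).symm] at this

open Classical in
/-- Each occurrence survives unless the new vertex is attached to one of its `a + 1` vertices. -/
lemma sum_card_avoid {a k : ℕ} (p : ParentSpace (k + 1)) (q : ParentSpace (a + 1)) :
    ∑ x : Fin (k + 1), ((occ p q).filter (fun e => x ∉ Set.range e)).card =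
      (occ p q).card * (k - a) := by
  have h := Finset.sum_card_bipartiteAbove_eq_sum_card_bipartiteBelow
    (s := (Finset.univ : Finset (Fin (k + 1)))) (t := occ p q)
    (fun x e => x ∉ Set.range e)
  simp only [Finset.bipartiteAbove, Finset.bipartiteBelow] at h
  rw [h, Finset.sum_const_nat]
  intro e he
  have hinj := (mem_occ.1 he).1.injective
  have : (Finset.univ.filter (fun x : Fin (k + 1) => x ∉ Set.range e)) =
      (Finset.univ.image e)ᶜ := by
    ext x; simp
  rw [this, Finset.card_compl, Finset.card_image_of_injective _ hinj]
  simp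

lemma sum_push {k : ℕ} (f : ParentSpace (k + 2) → ℕ) :
    ∑ p, f p = ∑ p : ParentSpace (k + 1), ∑ x : Fin (k + 1), f (push p x) := by
  rw [Finset.sum_comm, ← Finset.sum_product']
  exact ((Fin.snocEquiv (fun j : Fin (k + 1) => Fin (j.val + 1))).sum_comp f).symm

lemma card_parentSpace (k : ℕ) : Fintype.card (ParentSpace (k + 1)) = k.factorial := by
  rw [Fintype.card_pi]
  simp only [Fintype.card_fin]
  change ∏ j : Fin k, (j.val + 1) = _
  rw [Fin.prod_univ_eq_prod_range (fun j => j + 1) k, Finset.prod_range_add_one_eq_factorial]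

/-- Attaching a vertex always creates a leaf, and destroys the leaf it is attached to, if any. -/
lemma numOcc_leaf (k : ℕ) (q : ParentSpace 1) :
    numOcc (k + 1) q = numOcc k q * k + (k + 1).factorial := by
  classical
  have h1 : ∀ (p : ParentSpace (k + 1)) (x : Fin (k + 1)),
      (Finset.univ.filter (fun e' : Fin 0 → Fin (k + 1) => IsOcc (push p x) q
        (Fin.snoc (α := fun _ => Fin (k + 2)) (fun i => (e' i).castSucc)
          (Fin.last (k + 1))))).card = 1 := by
    intro p x
    rw [Finset.filter_true_of_mem]
    · simp
    · intro e' _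
      convert isOcc_push_leaf p x q using 1
      funext i
      rw [Subsingleton.elim (α := Fin 1) i (Fin.last 0), Fin.snoc_last]
  rw [numOcc, sum_push]
  simp only [card_occ_push, h1, Finset.sum_add_distrib, sum_card_avoid]
  rw [← Finset.sum_mul, numOcc]
  simp only [Finset.sum_const, Finset.card_univ, card_parentSpace, Fintype.card_fin, smul_eq_mul,
    Nat.factorial_succ]
  simp [mul_comm]

/-- Attaching a vertex creates an occurrence of `push q y` exactly when it is attached to the vertex
labelled `y` of an occurrence of `q`. -/
lemma numOcc_push {a : ℕ} (k : ℕ) (q : ParentSpace (a + 1)) (y : Fin (a + 1)) :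
    numOcc (k + 1) (push q y) = numOcc k (push q y) * (k - (a + 1)) + numOcc k q := by
  classical
  have h1 : ∀ p : ParentSpace (k + 1), ∑ x : Fin (k + 1),
      (Finset.univ.filter (fun e' : Fin (a + 1) → Fin (k + 1) => IsOcc (push p x) (push q y)
        (Fin.snoc (α := fun _ => Fin (k + 2)) (fun i => (e' i).castSucc)
          (Fin.last (k + 1))))).card = (occ p q).card := by
    intro p
    simp only [isOcc_push_snoc]
    rw [Finset.card_eq_sum_card_fiberwise (f := fun e => e y) (t := Finset.univ)
      (fun _ _ => Finset.mem_univ _)]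
    simp only [occ, Finset.filter_filter]
  rw [numOcc, sum_push]
  simp only [card_occ_push, h1, Finset.sum_add_distrib, sum_card_avoid]
  rw [← Finset.sum_mul, numOcc, numOcc]

/-- A pattern with `a + 1` vertices has exactly `(k + 1)! / (a + 2)!` occurrences in all trees on
`k + 1 > a + 1` vertices, whatever its shape. -/
lemma numOcc_mul_factorial (a : ℕ) : ∀ (q : ParentSpace (a + 1)) (k : ℕ), a + 1 ≤ k →
    numOcc k q * (a + 2).factorial = (k + 1).factorial := by
  induction a with
  | zero =>
    intro q k hk
    induction k, hk using Nat.le_induction with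
    | base => rw [numOcc_leaf]; simp
    | succ k hk ih =>
      rw [numOcc_leaf, Nat.factorial_succ (k + 1), ← ih]
      simp [Nat.factorial] at ih ⊢
      grind
  | succ a iha =>
    intro q k hk
    obtain ⟨⟨y, q⟩, rfl⟩ :=
      (Fin.snocEquiv (fun j : Fin (a + 1) => Fin (j.val + 1))).surjective q
    change numOcc k (push q y) * _ = _
    induction k, hk using Nat.le_induction with
    | base =>
      rw [numOcc_push, Nat.sub_self, mul_zero, zero_add, Nat.factorial_succ (a + 2)]
      have h : numOcc (a + 1) q * (a + 2).factorial = (a + 2).factorial := iha q (a + 1) le_rfl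
      rw [mul_left_comm, h]
    | succ k hk ih =>
      have h := iha q k (by omega)
      rw [numOcc_push, Nat.factorial_succ (k + 1)]
      rw [Nat.factorial_succ (a + 2)] at ih ⊢
      obtain ⟨d, rfl⟩ := Nat.exists_eq_add_of_le (show a + 1 ≤ k by omega)
      rw [Nat.add_sub_cancel_left]
      grind

/-! ### Fringe subtrees and occurrences -/

lemma recTree_adj {k : ℕ} (p : ParentSpace (k + 1)) (u v : Fin (k + 1)) :
    (recTree p).Adj u v ↔
      (u ≠ 0 ∧ parentMap p u = v) ∨ (v ≠ 0 ∧ parentMap p v = u) := by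
  have key : ∀ u v : Fin (k + 1),
      (∃ j : Fin (k + 1 - 1), u.val = j.val + 1 ∧ v.val = (p j).val) ↔
        (u ≠ 0 ∧ parentMap p u = v) := by
    intro u v
    constructor
    · rintro ⟨j, hu, hv⟩
      have : u = Fin.succ (n := k) j := Fin.ext (by simpa using hu)
      subst this
      exact ⟨Fin.succ_ne_zero _, Fin.ext (by rw [parentMap_succ, hv])⟩
    · rintro ⟨hu, rfl⟩
      obtain ⟨j, rfl⟩ := Fin.exists_succ_eq.2 hu
      exact ⟨j, by simp, parentMap_succ p j⟩
  rw [recTree, SimpleGraph.fromRel_adj, key, key]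
  constructor
  · exact fun h => h.2
  · rintro (⟨h, rfl⟩ | ⟨h, rfl⟩)
    · exact ⟨(parentMap_lt p u h).ne', Or.inl ⟨h, rfl⟩⟩
    · exact ⟨(parentMap_lt p v h).ne, Or.inr ⟨h, rfl⟩⟩

lemma desc_ge {k : ℕ} {p : ParentSpace (k + 1)} {u v : Fin (k + 1)} (h : u ∈ descSet p v) :
    v ≤ u := by
  obtain ⟨t, rfl⟩ := h
  induction t with
  | zero => simp
  | succ t ih =>
    rw [Function.iterate_succ_apply']
    exact (parentMap_le p _).trans ih

lemma desc_self {k : ℕ} (p : ParentSpace (k + 1)) (v : Fin (k + 1)) : v ∈ descSet p v := ⟨0, rfl⟩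

lemma desc_of_parent {k : ℕ} {p : ParentSpace (k + 1)} {u v : Fin (k + 1)}
    (h : parentMap p u ∈ descSet p v) : u ∈ descSet p v := by
  obtain ⟨t, ht⟩ := h
  exact ⟨t + 1, by rwa [Function.iterate_succ_apply]⟩

lemma parent_of_desc {k : ℕ} {p : ParentSpace (k + 1)} {u v : Fin (k + 1)}
    (h : u ∈ descSet p v) (huv : u ≠ v) : parentMap p u ∈ descSet p v := by
  obtain ⟨t, ht⟩ := h
  cases t with
  | zero => exact absurd ht huv
  | succ t => exact ⟨t, by rwa [Function.iterate_succ_apply] at ht⟩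

lemma IsOcc.ne_zero {a k : ℕ} {p : ParentSpace (k + 1)} {q : ParentSpace (a + 1)}
    {e : Fin (a + 1) → Fin (k + 1)} (he : IsOcc p q e) {i : Fin (a + 1)} (hi : i ≠ 0) :
    e i ≠ 0 :=
  Fin.pos_iff_ne_zero.1 ((Fin.zero_le _).trans_lt (he.1 (Fin.pos_iff_ne_zero.2 hi)))

lemma IsOcc.range_eq {a k : ℕ} {p : ParentSpace (k + 1)} {q : ParentSpace (a + 1)}
    {e : Fin (a + 1) → Fin (k + 1)} (he : IsOcc p q e) : Set.range e = descSet p (e 0) := by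
  apply Set.Subset.antisymm
  · rintro _ ⟨i, rfl⟩
    induction i using WellFoundedLT.induction with
    | ind i ih =>
      by_cases hi : i = 0
      · subst hi
        exact desc_self _ _
      · apply desc_of_parent
        rw [he.2.1 i hi]
        exact ih _ (parentMap_lt q i hi)
  · rintro u ⟨t, ht⟩
    induction t generalizing u with
    | zero => exact ⟨0, ht.symm⟩
    | succ t ih =>
      rw [Function.iterate_succ_apply] at ht
      by_cases hu : u = 0
      · subst hu
        rw [parentMap_zero] at ht
        exact ih ht
      · exact he.2.2 u hu (ih ht)

/-- An occurrence of `q` is an isomorphism from `T_q` to a fringe subtree. -/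
lemma IsOcc.adj_iff {a k : ℕ} {p : ParentSpace (k + 1)} {q : ParentSpace (a + 1)}
    {e : Fin (a + 1) → Fin (k + 1)} (he : IsOcc p q e) (i j : Fin (a + 1)) :
    (recTree p).Adj (e i) (e j) ↔ (recTree q).Adj i j := by
  have key : ∀ i j, (e i ≠ 0 ∧ parentMap p (e i) = e j) ↔ (i ≠ 0 ∧ parentMap q i = j) := by
    intro i j
    by_cases hi : i = 0
    · subst hi
      simp only [ne_eq, not_true_eq_false, false_and, iff_false]
      rintro ⟨h, h'⟩
      have := parentMap_lt p _ h
      rw [h'] at this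
      exact absurd (he.1.monotone (Fin.zero_le j)) (not_le.2 this)
    · simp [hi, he.ne_zero hi, he.2.1 i hi, he.1.injective.eq_iff]
  rw [recTree_adj, recTree_adj, key, key]

lemma IsOcc.rootedIso {a k : ℕ} {p : ParentSpace (k + 1)} {q : ParentSpace (a + 1)}
    {e : Fin (a + 1) → Fin (k + 1)} (he : IsOcc p q e) :
    RootedIso ((recTree p).induce (descSet p (e 0))) ⟨e 0, ⟨0, rfl⟩⟩ (recTree q) 0 := by
  let f : Fin (a + 1) ≃ descSet p (e 0) :=
    (Equiv.ofInjective e he.1.injective).trans (Equiv.setCongr he.range_eq)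
  have hf : ∀ i, (f i).val = e i := fun i => rfl
  let φ : recTree q ≃g (recTree p).induce (descSet p (e 0)) :=
    { toEquiv := f
      map_rel_iff' := by
        intro i j
        rw [SimpleGraph.comap_adj]
        exact he.adj_iff i j }
  refine ⟨φ.symm, ?_⟩
  rw [RelIso.symm_apply_eq]
  exact Subtype.ext rfl

lemma RootedIso.trans {A B C : Type} {G : SimpleGraph A} {G' : SimpleGraph B}
    {G'' : SimpleGraph C} {a : A} {b : B} {c : C} (h : RootedIso G a G' b)
    (h' : RootedIso G' b G'' c) : RootedIso G a G'' c := by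
  obtain ⟨φ, rfl⟩ := h
  obtain ⟨ψ, rfl⟩ := h'
  exact ⟨φ.trans ψ, rfl⟩

lemma RootedIso.symm {A B : Type} {G : SimpleGraph A} {G' : SimpleGraph B}
    {a : A} {b : B} (h : RootedIso G a G' b) : RootedIso G' b G a := by
  obtain ⟨φ, rfl⟩ := h
  exact ⟨φ.symm, φ.symm_apply_apply a⟩

/-- Relabelling a fringe subtree with `a + 1` vertices increasingly gives a recursive tree. -/
lemma exists_occ {a k : ℕ} (p : ParentSpace (k + 1)) (v : Fin (k + 1))
    (hcard : Nat.card (descSet p v) = a + 1) :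
    ∃ (q : ParentSpace (a + 1)) (e : Fin (a + 1) → Fin (k + 1)), IsOcc p q e ∧ e 0 = v := by
  classical
  have hc : (descSet p v).toFinset.card = a + 1 := by
    rw [Set.toFinset_card, ← Nat.card_eq_fintype_card, hcard]
  set e := (descSet p v).toFinset.orderEmbOfFin hc with he
  have hr : Set.range e = descSet p v := by simp [he]
  have h0 : e 0 = v := by
    apply le_antisymm
    · obtain ⟨i, hi⟩ : v ∈ Set.range e := hr ▸ desc_self p v
      rw [← hi]
      exact e.monotone (Fin.zero_le i)
    · exact desc_ge (hr ▸ Set.mem_range_self (f := e) 0)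
  have hpar : ∀ i : Fin a, ∃ j : Fin (i.val + 1),
      e (j.castLE (by omega)) = parentMap p (e i.succ) := by
    intro i
    have hpos : e 0 < e i.succ := e.strictMono (Fin.succ_pos i)
    have hmem : parentMap p (e i.succ) ∈ descSet p v :=
      parent_of_desc (hr ▸ Set.mem_range_self (f := e) _) (h0 ▸ hpos.ne')
    rw [← hr] at hmem
    obtain ⟨j, hj⟩ := hmem
    have hlt : j < i.succ := by
      rw [← e.lt_iff_lt, hj]
      exact parentMap_lt p _ (Fin.pos_iff_ne_zero.1 ((Fin.zero_le _).trans_lt hpos))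
    exact ⟨⟨j.val, by simpa [Fin.lt_def] using hlt⟩, hj⟩
  choose q hq using hpar
  refine ⟨q, e, ⟨e.strictMono, fun i hi => ?_, fun u _ hmem => ?_⟩, h0⟩
  · obtain ⟨i, rfl⟩ := Fin.exists_succ_eq.2 hi
    rw [← hq i]
    exact congrArg e <| Fin.ext (parentMap_succ (k := a) q i).symm
  · rw [hr] at hmem ⊢
    exact desc_of_parent hmem

/-- An occurrence, and the pattern it realises, are determined by its root. -/
lemma IsOcc.unique {a k : ℕ} {p : ParentSpace (k + 1)} {q q' : ParentSpace (a + 1)}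
    {e e' : Fin (a + 1) → Fin (k + 1)} (he : IsOcc p q e) (he' : IsOcc p q' e')
    (h : e 0 = e' 0) : q = q' ∧ e = e' := by
  have hee : e = e' := by
    apply (StrictMono.range_inj he.1 he'.1).1
    rw [he.range_eq, he'.range_eq, h]
  subst hee
  refine ⟨parentMap_injective fun u hu => he.1.injective ?_, rfl⟩
  rw [← he.2.1 u hu, ← he'.2.1 u hu]

open Classical in
/-- The fringe subtrees of `T_p` isomorphic to `H`, sorted by their increasing relabelling `q`. -/
lemma card_fringe {a k : ℕ} (p : ParentSpace (k + 1)) (H : ParentSpace (a + 1)) :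
    Nat.card {v : Fin (k + 1) //
        RootedIso ((recTree p).induce (descSet p v)) ⟨v, ⟨0, rfl⟩⟩ (recTree H) 0} =
      ∑ q ∈ Finset.univ.filter (fun q : ParentSpace (a + 1) =>
        RootedIso (recTree q) 0 (recTree H) 0), (occ p q).card := by
  rw [← Finset.card_sigma, Nat.card_eq_fintype_card, Fintype.card_subtype]
  symm
  refine Finset.card_bij (fun x _ => x.2 0) ?_ ?_ ?_
  · rintro ⟨q, e⟩ hx
    simp only [Finset.mem_sigma, Finset.mem_filter, Finset.mem_univ, true_and, mem_occ] at hx ⊢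
    exact hx.2.rootedIso.trans hx.1
  · rintro ⟨q, e⟩ hx ⟨q', e'⟩ hx' h
    simp only [Finset.mem_sigma, Finset.mem_filter, Finset.mem_univ, true_and, mem_occ] at hx hx'
    obtain ⟨rfl, rfl⟩ := hx.2.unique hx'.2 h
    rfl
  · intro v hv
    simp only [Finset.mem_filter, Finset.mem_univ, true_and] at hv
    have hcard : Nat.card (descSet p v) = a + 1 := by
      obtain ⟨φ, -⟩ := hv
      rw [Nat.card_congr φ.toEquiv, Nat.card_fin]
    obtain ⟨q, e, he, rfl⟩ := exists_occ p v hcard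
    refine ⟨⟨q, e⟩, ?_, rfl⟩
    simp only [Finset.mem_sigma, Finset.mem_filter, Finset.mem_univ, true_and, mem_occ]
    exact ⟨he.rootedIso.symm.trans hv, he⟩

/-- For a fixed rooted tree `H` on `m ≥ 1` vertices, given as a parent function with
root `0`, the expected number of vertices `v` of `Rec_n` whose fringe subtree is
isomorphic to `H` as a rooted tree equals `(β/(m(m+1)))·n + O(1)`, where `β` is the
proportion of parent functions `q` on `{0, …, m-1}` with `T_q ≅ H` as rooted trees. -/
theorem stmt13 (m : ℕ) (hm : 1 ≤ m) (H : ParentSpace m) :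
    ∃ C : ℝ, ∃ N : ℕ, ∀ n ≥ N,
      |(∑ p : ParentSpace n,
          (Nat.card {v : Fin n //
            RootedIso ((recTree p).induce (descSet p v)) ⟨v, ⟨0, rfl⟩⟩
              (recTree H) ⟨0, hm⟩} : ℝ)) / Fintype.card (ParentSpace n)
        - ((Nat.card {q : ParentSpace m //
              RootedIso (recTree q) (⟨0, hm⟩ : Fin m) (recTree H) ⟨0, hm⟩} : ℝ)
            / Fintype.card (ParentSpace m)) / ((m : ℝ) * ((m : ℝ) + 1)) * n| ≤ C := by
  classical
  obtain ⟨a, rfl⟩ : ∃ a, m = a + 1 := ⟨m - 1, by omega⟩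
  -- The asymptotic formula is an identity as soon as `n > m`.
  refine ⟨0, a + 2, fun n hn => ?_⟩
  obtain ⟨k, rfl⟩ : ∃ k, n = k + 1 := ⟨n - 1, by omega⟩
  apply le_of_eq
  rw [abs_eq_zero, sub_eq_zero, card_parentSpace, card_parentSpace]
  set S := Finset.univ.filter (fun q : ParentSpace (a + 1) =>
    RootedIso (recTree q) 0 (recTree H) 0) with hS
  have hβ : Nat.card {q : ParentSpace (a + 1) //
      RootedIso (recTree q) (⟨0, hm⟩ : Fin (a + 1)) (recTree H) ⟨0, hm⟩} = S.card := by
    rw [Nat.card_eq_fintype_card, Fintype.card_subtype]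
    rfl
  have hsum : ∑ p : ParentSpace (k + 1), (Nat.card {v : Fin (k + 1) //
      RootedIso ((recTree p).induce (descSet p v)) ⟨v, ⟨0, rfl⟩⟩
        (recTree H) ⟨0, hm⟩} : ℝ) = ∑ q ∈ S, (numOcc k q : ℝ) := by
    simp only [numOcc, Nat.cast_sum]
    rw [Finset.sum_comm]
    refine Finset.sum_congr rfl fun p _ => ?_
    rw [← Nat.cast_sum]
    exact congrArg _ (card_fringe p H)
  have hval : ∀ q ∈ S, (numOcc k q : ℝ) = (k + 1).factorial / (a + 2).factorial := by
    intro q _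
    rw [eq_div_iff (by positivity)]
    exact_mod_cast numOcc_mul_factorial a q k (by omega)
  rw [hβ, hsum, Finset.sum_congr rfl hval, Finset.sum_const, nsmul_eq_mul]
  have h1 : (k.factorial : ℝ) ≠ 0 := by positivity
  have h2 : (a.factorial : ℝ) ≠ 0 := by positivity
  simp only [Nat.factorial_succ]
  push_cast
  field_simp
end
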